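/- Let G=(V,E,I,{s,t}) be an inner Eulerian grapht with |E|≤ℵ₀ in which δ_G(s) is the unique Erdős-Menger st-cut. Then after the deletion of at most two edges, s remains linked. -/

import Mathlib

/-! Common definitions: graphts (multigraphs with terminals), walks, paths, cycles,
edge cuts, inner Eulerian graphts, path systems, linkages, Erdős–Menger cuts,
restriction (edge deletion) and contraction. -/

universe u v

/-- A *grapht*: a multigraph (no loops, parallel edges allowed) given by an incidence
function `I : E → Sym2 V`, together with a set `T` of at least two terminal vertices. -/
structure Grapht (V : Type u) (E : Type v) where
  I : E → Sym2 V
  loopless : ∀ e : E, ¬ (I e).IsDiag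
  T : Set V
  T_nontrivial : T.Nontrivial

namespace Grapht

variable {V : Type u} {E : Type v}

/-- `G.IsWalk vs es` holds when `vs` is the vertex sequence and `es` the edge sequence
of a walk in `G`. -/
inductive IsWalk (G : Grapht V E) : List V → List E → Prop
  | nil (v : V) : IsWalk G [v] []
  | cons {u w : V} {vs : List V} {e : E} {es : List E} :
      G.I e = s(u, w) → IsWalk G (w :: vs) es → IsWalk G (u :: w :: vs) (e :: es)

/-- A finite path in the grapht `G` (no repeated vertices), with endpoints `first`, `last`. -/
structure Path (G : Grapht V E) where
  first : V
  last : V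
  verts : List V
  edges : List E
  isWalk : G.IsWalk verts edges
  nodup : verts.Nodup
  head_eq : verts.head? = some first
  getLast_eq : verts.getLast? = some last

/-- A finite cycle in the grapht `G`. -/
structure Cycle (G : Grapht V E) where
  verts : List V
  edges : List E
  isWalk : G.IsWalk verts edges
  closed : verts.head? = verts.getLast?
  nontrivial : edges ≠ []
  edges_nodup : edges.Nodup
  tail_nodup : verts.tail.Nodup

variable {G : Grapht V E}

/-- The internal (inner) vertices of a path. -/
def Path.inner (P : G.Path) : List V := (P.verts.drop 1).dropLast

/-- The edge set of a path. -/
def Path.edgeSet (P : G.Path) : Set E := {e | e ∈ P.edges}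

/-- The edge set of a cycle. -/
def Cycle.edgeSet (C : G.Cycle) : Set E := {e | e ∈ C.edges}

variable (G)

/-- `δ_G(X)`: the set of edges with exactly one endpoint in `X`. -/
def edgeCut (X : Set V) : Set E :=
  {e | ∃ u w, G.I e = s(u, w) ∧ u ∈ X ∧ w ∉ X}

/-- A grapht is *inner Eulerian* if there is no `X ⊆ V ∖ T` whose cut `δ(X)` is a
finite set of odd size. -/
def InnerEulerian : Prop :=
  ∀ X : Set V, Disjoint X G.T → ¬ ((G.edgeCut X).Finite ∧ Odd (G.edgeCut X).ncard)

/-- An `AB`-path: a path with first vertex in `A`, last vertex in `B` and no internal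
vertex in `A ∪ B`. -/
def IsABPath (A B : Set V) (P : G.Path) : Prop :=
  P.first ∈ A ∧ P.last ∈ B ∧ ∀ v ∈ P.inner, v ∉ A ∪ B

/-- A `T`-path: a path between two distinct terminal vertices without internal
terminal vertices. -/
def IsTPath (P : G.Path) : Prop :=
  P.first ∈ G.T ∧ P.last ∈ G.T ∧ P.first ≠ P.last ∧ ∀ v ∈ P.inner, v ∉ G.T

/-- A system of pairwise edge-disjoint paths. -/
def EdgeDisjoint (Ps : Set G.Path) : Prop :=
  Ps.Pairwise fun P Q => ∀ e, e ∈ P.edges → e ∉ Q.edges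

/-- A system of pairwise edge-disjoint `T`-paths. -/
def IsTPathSystem (Ps : Set G.Path) : Prop :=
  G.EdgeDisjoint Ps ∧ ∀ P ∈ Ps, G.IsTPath P

/-- The set of edges used by a path system. -/
def sysEdges (Ps : Set G.Path) : Set E := ⋃ P ∈ Ps, P.edgeSet

/-- `C` is *orthogonal* to the path system `Ps`: `C` consists of exactly one edge from
each path of `Ps`. -/
def Orthogonal (C : Set E) (Ps : Set G.Path) : Prop :=
  (∀ P ∈ Ps, ∃! e, e ∈ C ∧ e ∈ P.edges) ∧ ∀ e ∈ C, ∃ P ∈ Ps, e ∈ P.edges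

/-- `C` separates `A` and `B`: every `AB`-path meets `C` (i.e. `G − C` has no `AB`-path). -/
def Separates (C : Set E) (A B : Set V) : Prop :=
  ∀ P : G.Path, G.IsABPath A B P → ∃ e ∈ C, e ∈ P.edges

/-- An `AB`-cut. -/
def IsABCut (A B : Set V) (C : Set E) : Prop :=
  ∀ P : G.Path, G.IsABPath A B P → ∃ e ∈ C, e ∈ P.edges

/-- An Erdős–Menger `AB`-cut: an `AB`-cut orthogonal to some system of pairwise
edge-disjoint `AB`-paths. -/
def IsEMABCut (A B : Set V) (C : Set E) : Prop :=
  G.IsABCut A B C ∧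
    ∃ Ps : Set G.Path, G.EdgeDisjoint Ps ∧ (∀ P ∈ Ps, G.IsABPath A B P) ∧ G.Orthogonal C Ps

/-- The order `⊴` on (Erdős–Menger) `AB`-cuts: on every `AB`-path the first edge of `C`
comes no later than the first edge of `C'`. -/
def ABCutLE (A B : Set V) (C C' : Set E) : Prop :=
  ∀ P : G.Path, G.IsABPath A B P →
    ∀ i : Fin P.edges.length, P.edges.get i ∈ C' →
      ∃ j : Fin P.edges.length, (j : ℕ) ≤ (i : ℕ) ∧ P.edges.get j ∈ C

/-- `C` is the `⊴`-largest Erdős–Menger `AB`-cut. -/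
def IsLargestEMABCut (A B : Set V) (C : Set E) : Prop :=
  G.IsEMABCut A B C ∧ ∀ C', G.IsEMABCut A B C' → G.ABCutLE A B C' C

/-- A system `Ps` of pairwise edge-disjoint `T`-paths *links* the terminal `t`:
it covers `δ(t)`. -/
def Links (Ps : Set G.Path) (t : V) : Prop :=
  G.IsTPathSystem Ps ∧ ∀ e ∈ G.edgeCut {t}, ∃ P ∈ Ps, e ∈ P.edges

/-- The terminal `t` is linked. -/
def Linked (t : V) : Prop := ∃ Ps : Set G.Path, G.Links Ps t

/-- The linkability condition: every terminal is linked. -/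
def LinkabilityCondition : Prop := ∀ t ∈ G.T, G.Linked t

/-- A perfect linkage: a system of pairwise edge-disjoint `T`-paths linking every
terminal. -/
def IsPerfectLinkage (Ps : Set G.Path) : Prop :=
  G.IsTPathSystem Ps ∧ ∀ t ∈ G.T, ∀ e ∈ G.edgeCut {t}, ∃ P ∈ Ps, e ∈ P.edges

/-- In the two-terminal setting: a system of pairwise edge-disjoint `st`-paths
covering `δ(s)` (a linkage of `s`). -/
def IsStLinkage (s t : V) (Ps : Set G.Path) : Prop :=
  G.EdgeDisjoint Ps ∧ (∀ P ∈ Ps, G.IsABPath {s} {t} P) ∧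
    ∀ e ∈ G.edgeCut {s}, ∃ P ∈ Ps, e ∈ P.edges

/-- `s` is linked (two-terminal setting). -/
def StLinked (s t : V) : Prop := ∃ Ps : Set G.Path, G.IsStLinkage s t Ps

/-- `λ_G(A,B)`: the maximal number of pairwise edge-disjoint `AB`-paths. -/
noncomputable def lambda (A B : Set V) : ℕ :=
  sSup {n : ℕ | ∃ Ps : Set G.Path, G.EdgeDisjoint Ps ∧ (∀ P ∈ Ps, G.IsABPath A B P) ∧
    Ps.Finite ∧ Ps.ncard = n}

/-- The grapht obtained by deleting all edges outside `F`. -/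
def restrict (F : Set E) : Grapht V F where
  I e := G.I e.1
  loopless e := G.loopless e.1
  T := G.T
  T_nontrivial := G.T_nontrivial

/-- The map sending every vertex of a contracted set `X t` (`t ∈ T`) to `t`. -/
noncomputable def contractMap (X : V → Set V) : V → V := fun v =>
  letI := Classical.dec (∃ u ∈ G.T, v ∈ X u)
  if h : ∃ u ∈ G.T, v ∈ X u then h.choose else v

/-- The contraction `G/ℱ` of the family `ℱ = {X t : t ∈ T}`: each `X t` is contracted
to `t` and the arising loops are deleted. -/
noncomputable def contract (X : V → Set V) :
    Grapht V {e : E // ¬ ((G.I e).map (G.contractMap X)).IsDiag} where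
  I e := (G.I e.1).map (G.contractMap X)
  loopless e := e.2
  T := G.T
  T_nontrivial := G.T_nontrivial

end Grapht

/-! Let a system of edge-disjoint trails from `s` to `t` cover all edges at `s`, and delete an edge
`g`. At most one trail `l` is destroyed; try to repair the remaining system by augmenting it along a
residual walk from `s` to `t`. If there is none, the set `X` of vertices reachable from `s` by
residual walks has its cut covered by the original trails, apart from edges deleted before, and each
of these trails leaves `X` once and never enters it. In particular `g`, the only edge of `l` that
can leave `X`, lies in the cut of `X`.

Cut the trails at `X`. On either side, we get trails that cover all but at most one edge of the cut.
Any prescribed edge of the cut can be made covered: otherwise the vertices reachable by residual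
walks, with the near side removed, would form a set joined to the rest by a single edge, which
parity forbids. Peeling off the trail through that edge preserves parity, so the countably many
edges of the cut can be covered one after another. Gluing the two sides together shows that the cut
of `X` is an Erdős–Menger cut. By uniqueness it is the cut of `s`, so `g` is an edge at `s`; but
then discarding `l` already leaves all remaining edges at `s` covered. -/

namespace Grapht

variable {V : Type u} {E : Type v} {G : Grapht V E}

section Arc

/-- An edge of a grapht together with one of its two orientations. -/
@[ext]
structure Arc (G : Grapht V E) where
  src : V
  edge : E
  tgt : V
  inc : G.I edge = s(src, tgt)

namespace Arc

/-- The opposite orientation of the same edge. -/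
@[simps]
def rev (a : G.Arc) : G.Arc := ⟨a.tgt, a.edge, a.src, a.inc.trans Sym2.eq_swap⟩

@[simp]
lemma rev_rev (a : G.Arc) : a.rev.rev = a := rfl

lemma eq_or_eq_rev {a b : G.Arc} (h : a.edge = b.edge) : a = b ∨ a = b.rev := by
  have hinc : s(a.src, a.tgt) = s(b.src, b.tgt) := by rw [← a.inc, ← b.inc, h]
  rcases Sym2.eq_iff.1 hinc with ⟨hs, ht⟩ | ⟨hs, ht⟩
  · exact .inl (Arc.ext hs h ht)
  · exact .inr (Arc.ext hs h ht)

lemma rev_ne (a : G.Arc) : a.rev ≠ a := fun h ↦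
  G.loopless a.edge (by rw [a.inc]; exact congrArg tgt h)

lemma edge_mem_edgeCut {a : G.Arc} {X : Set V} :
    a.edge ∈ G.edgeCut X ↔ ¬(a.src ∈ X ↔ a.tgt ∈ X) := by
  constructor
  · rintro ⟨u, w, h, hu, hw⟩
    rcases Sym2.eq_iff.1 (a.inc.symm.trans h) with ⟨rfl, rfl⟩ | ⟨rfl, rfl⟩ <;> simp [hu, hw]
  · intro h
    by_cases hs : a.src ∈ X
    · exact ⟨a.src, a.tgt, a.inc, hs, fun ht ↦ h (by simp [hs, ht])⟩
    · exact ⟨a.tgt, a.src, a.rev.inc, by simpa [hs] using h, hs⟩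

lemma edge_mem_edgeCut_of_src_mem {a : G.Arc} {X : Set V} (hs : a.src ∈ X) :
    a.edge ∈ G.edgeCut X ↔ a.tgt ∉ X := by
  simp [edge_mem_edgeCut, hs]

lemma edge_mem_edgeCut_of_tgt_notMem {a : G.Arc} {X : Set V} (ht : a.tgt ∉ X) :
    a.edge ∈ G.edgeCut X ↔ a.src ∈ X := by
  simp [edge_mem_edgeCut, ht]

end Arc

lemma exists_arc_of_mem_edgeCut {X : Set V} {e : E} (he : e ∈ G.edgeCut X) :
    ∃ a : G.Arc, a.edge = e ∧ a.src ∈ X ∧ a.tgt ∉ X :=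
  let ⟨u, w, h, hu, hw⟩ := he
  ⟨⟨u, e, w, h⟩, rfl, hu, hw⟩

lemma edgeCut_compl (X : Set V) : G.edgeCut Xᶜ = G.edgeCut X := by
  refine Set.Subset.antisymm (fun e he ↦ ?_) fun e he ↦ ?_ <;>
    obtain ⟨a, rfl, hs, ht⟩ := exists_arc_of_mem_edgeCut he <;>
    simp_all [Arc.edge_mem_edgeCut]

end Arc

section Walk

/-- `IsArcWalk x z p` says that the arcs of `p`, in this order, form a walk from `x` to `z`. -/
def IsArcWalk : V → V → List G.Arc → Prop
  | x, z, [] => x = z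
  | x, z, a :: p => a.src = x ∧ IsArcWalk a.tgt z p

variable {x z : V} {p q : List G.Arc} {a : G.Arc} {X : Set V}

lemma isArcWalk_nil : IsArcWalk x z ([] : List G.Arc) ↔ x = z := Iff.rfl

lemma isArcWalk_cons : IsArcWalk x z (a :: p) ↔ a.src = x ∧ IsArcWalk a.tgt z p := Iff.rfl

lemma isArcWalk_append :
    IsArcWalk x z (p ++ q) ↔ ∃ y, IsArcWalk x y p ∧ IsArcWalk y z q := by
  induction p generalizing x with
  | nil => simp [isArcWalk_nil]
  | cons a p ih => simp only [List.cons_append, isArcWalk_cons, ih, and_assoc, exists_and_left]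

lemma IsArcWalk.reverse (h : IsArcWalk x z p) : IsArcWalk z x (p.map Arc.rev).reverse := by
  induction p generalizing x with
  | nil => exact h.symm
  | cons a p ih =>
    rw [List.map_cons, List.reverse_cons, isArcWalk_append]
    exact ⟨a.tgt, ih h.2, rfl, h.1⟩

lemma mem_reverse_map_rev : a ∈ (p.map Arc.rev).reverse ↔ a.rev ∈ p := by
  simp only [List.mem_reverse, List.mem_map]
  exact ⟨by rintro ⟨b, hb, rfl⟩; exact hb, fun h ↦ ⟨a.rev, h, rfl⟩⟩

lemma map_edge_reverse_map_rev (p : List G.Arc) :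
    (p.map Arc.rev).reverse.map Arc.edge = (p.map Arc.edge).reverse := by
  simp [List.map_reverse, Function.comp_def]

lemma IsArcWalk.sum_sub (h : IsArcWalk x z p) (f : V → ℤ) :
    (p.map fun a ↦ f a.tgt - f a.src).sum = f z - f x := by
  induction p generalizing x with
  | nil => simp [isArcWalk_nil.1 h]
  | cons a p ih => simp [ih h.2, h.1]

lemma IsArcWalk.exists_crossing (h : IsArcWalk x z p) (hx : x ∈ X) (hz : z ∉ X) :
    ∃ a ∈ p, a.src ∈ X ∧ a.tgt ∉ X := by
  induction p generalizing x with
  | nil => exact absurd (isArcWalk_nil.1 h ▸ hx) hz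
  | cons a p ih =>
    obtain ⟨rfl, h⟩ := h
    by_cases ha : a.tgt ∈ X
    · obtain ⟨b, hb, hbX⟩ := ih h ha
      exact ⟨b, List.mem_cons_of_mem _ hb, hbX⟩
    · exact ⟨a, List.mem_cons_self, hx, ha⟩

lemma IsArcWalk.src_mem_and_tgt_mem (h : IsArcWalk x z p) (hx : x ∈ X)
    (hX : ∀ a ∈ p, a.src ∈ X → a.tgt ∈ X) : ∀ a ∈ p, a.src ∈ X ∧ a.tgt ∈ X := by
  induction p generalizing x with
  | nil => simp
  | cons a p ih =>
    obtain ⟨rfl, h⟩ := h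
    obtain ⟨ha, hX⟩ := List.forall_mem_cons.1 hX
    exact List.forall_mem_cons.2 ⟨⟨hx, ha hx⟩, ih h (ha hx) hX⟩

end Walk

section EdgeSet

/-- The set of edges traversed by a list of arcs. -/
def edgeSet (p : List G.Arc) : Set E := {e | e ∈ p.map Arc.edge}

/-- The set of edges traversed by the members of a family of lists of arcs. -/
def edgeUnion (W : Set (List G.Arc)) : Set E := ⋃ p ∈ W, edgeSet p

/-- No arc of `p` leads from the complement of `X` into `X`. -/
def NeverEnters (X : Set V) (p : List G.Arc) : Prop := ∀ a ∈ p, a.tgt ∈ X → a.src ∈ X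

variable {x z : V} {p q : List G.Arc} {a : G.Arc} {X : Set V} {e : E}
  {W : Set (List G.Arc)}

lemma mem_edgeSet : e ∈ edgeSet p ↔ ∃ a ∈ p, a.edge = e := List.mem_map

lemma Arc.edge_mem_edgeSet (ha : a ∈ p) : a.edge ∈ edgeSet p := List.mem_map_of_mem ha

lemma mem_edgeUnion : e ∈ edgeUnion W ↔ ∃ p ∈ W, e ∈ edgeSet p := by simp [edgeUnion]

lemma edgeSet_subset_edgeSet (h : q ⊆ p) : edgeSet q ⊆ edgeSet p := List.map_subset _ h

lemma edgeSet_subset_iff {F : Set E} : edgeSet p ⊆ F ↔ ∀ a ∈ p, a.edge ∈ F :=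
  List.forall_mem_map

lemma edgeSet_subset_edgeUnion (hp : p ∈ W) : edgeSet p ⊆ edgeUnion W :=
  Set.subset_biUnion_of_mem hp

lemma edgeSet_reverse_map_rev (p : List G.Arc) :
    edgeSet (p.map Arc.rev).reverse = edgeSet p := by
  simp only [edgeSet, map_edge_reverse_map_rev, List.mem_reverse]

lemma IsArcWalk.exists_eq_append_cons (h : IsArcWalk x z p) (hx : x ∈ X) (hz : z ∉ X)
    (hp : NeverEnters X p) :
    ∃ q a r, p = q ++ a :: r ∧ (∀ b ∈ q, b.src ∈ X ∧ b.tgt ∈ X) ∧ a.src ∈ X ∧ a.tgt ∉ X ∧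
      ∀ b ∈ r, b.src ∉ X ∧ b.tgt ∉ X := by
  induction p generalizing x with
  | nil => exact absurd (isArcWalk_nil.1 h ▸ hx) hz
  | cons a p ih =>
    obtain ⟨rfl, h⟩ := h
    have hp' : NeverEnters X p := fun b hb ↦ hp b (List.mem_cons_of_mem _ hb)
    by_cases ha : a.tgt ∈ X
    · obtain ⟨q, b, r, rfl, hq, hb⟩ := ih h ha hp'
      exact ⟨a :: q, b, r, rfl, List.forall_mem_cons.2 ⟨⟨hx, ha⟩, hq⟩, hb⟩
    · exact ⟨[], a, p, rfl, by simp, hx, ha, h.src_mem_and_tgt_mem (X := Xᶜ) ha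
        fun b hb hbX ↦ mt (hp' b hb) hbX⟩

lemma edgeSet_append_cons_inter_edgeCut (hq : ∀ b ∈ q, b.src ∈ X ∧ b.tgt ∈ X)
    (ha : a.edge ∈ G.edgeCut X) (hp : ∀ b ∈ p, b.src ∉ X ∧ b.tgt ∉ X) :
    edgeSet (q ++ a :: p) ∩ G.edgeCut X = {a.edge} := by
  ext e
  refine ⟨fun ⟨he, heX⟩ ↦ ?_, fun he ↦ ?_⟩
  · obtain ⟨b, hb, rfl⟩ := mem_edgeSet.1 he
    rcases List.mem_append.1 hb with hb | hb
    · simp [Arc.edge_mem_edgeCut, hq b hb] at heX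
    · rcases List.mem_cons.1 hb with rfl | hb
      · rfl
      · simp [Arc.edge_mem_edgeCut, hp b hb] at heX
  · obtain rfl : e = a.edge := he
    exact ⟨Arc.edge_mem_edgeSet (by simp), ha⟩

lemma IsArcWalk.exists_inter_edgeCut_eq (h : IsArcWalk x z p) (hx : x ∈ X) (hz : z ∉ X)
    (hp : NeverEnters X p) : ∃ a ∈ p, edgeSet p ∩ G.edgeCut X = {a.edge} := by
  obtain ⟨q, a, r, rfl, hq, hsrc, htgt, hr⟩ := h.exists_eq_append_cons hx hz hp
  exact ⟨a, by simp, edgeSet_append_cons_inter_edgeCut hq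
    ((Arc.edge_mem_edgeCut_of_src_mem hsrc).2 htgt) hr⟩

end EdgeSet

section Path

variable {x y z s t : V} {p : List G.Arc} {vs : List V} {es : List E}

lemma IsArcWalk.exists_nodup_of_mem (h : IsArcWalk x z p) (hp : (x :: p.map Arc.tgt).Nodup)
    (hy : y ∈ x :: p.map Arc.tgt) :
    ∃ q ⊆ p, IsArcWalk y z q ∧ (y :: q.map Arc.tgt).Nodup := by
  rcases List.mem_cons.1 hy with rfl | hy
  · exact ⟨p, List.Subset.refl p, h, hp⟩
  · obtain ⟨a, ha, rfl⟩ := List.mem_map.1 hy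
    obtain ⟨q, r, rfl⟩ := List.append_of_mem ha
    obtain ⟨-, -, -, hr⟩ := isArcWalk_append.1 h
    refine ⟨r, fun b hb ↦ by simp [hb], hr, ?_⟩
    rw [List.map_append, List.map_cons, ← List.cons_append] at hp
    exact hp.of_append_right

lemma IsArcWalk.exists_nodup (h : IsArcWalk x z p) :
    ∃ q ⊆ p, IsArcWalk x z q ∧ (x :: q.map Arc.tgt).Nodup := by
  induction p generalizing x with
  | nil => exact ⟨[], List.Subset.refl _, h, by simp⟩
  | cons a p ih =>
    obtain ⟨rfl, h⟩ := h
    obtain ⟨q, hqp, hq, hnd⟩ := ih h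
    by_cases hx : a.src ∈ a.tgt :: q.map Arc.tgt
    · obtain ⟨r, hrq, hr⟩ := hq.exists_nodup_of_mem hnd hx
      exact ⟨r, fun b hb ↦ List.mem_cons_of_mem a (hqp (hrq hb)), hr⟩
    · exact ⟨a :: q, List.cons_subset_cons a hqp, ⟨rfl, hq⟩, List.nodup_cons.2 ⟨hx, hnd⟩⟩

lemma IsArcWalk.nodup_map_edge (h : IsArcWalk x z p) (hp : (x :: p.map Arc.tgt).Nodup) :
    (p.map Arc.edge).Nodup := by
  induction p generalizing x with
  | nil => simp
  | cons a p ih =>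
    obtain ⟨rfl, h⟩ := h
    obtain ⟨hsrc, hnd⟩ := List.nodup_cons.1 hp
    refine List.nodup_cons.2 ⟨fun ha ↦ ?_, ih h hnd⟩
    obtain ⟨b, hb, hba⟩ := List.mem_map.1 ha
    rcases Arc.eq_or_eq_rev hba with rfl | rfl
    · exact (List.nodup_cons.1 hnd).1 (List.mem_map_of_mem hb)
    · exact hsrc (List.mem_cons_of_mem _ (List.mem_map_of_mem hb))

lemma IsArcWalk.isWalk (h : IsArcWalk x z p) :
    G.IsWalk (x :: p.map Arc.tgt) (p.map Arc.edge) := by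
  induction p generalizing x with
  | nil => exact .nil x
  | cons a p ih =>
    obtain ⟨rfl, h⟩ := h
    exact .cons a.inc (ih h)

lemma IsArcWalk.getLast?_eq (h : IsArcWalk x z p) :
    (x :: p.map Arc.tgt).getLast? = some z := by
  induction p generalizing x with
  | nil => simp [isArcWalk_nil.1 h]
  | cons a p ih => simpa using ih h.2

lemma IsWalk.exists_isArcWalk (h : G.IsWalk vs es) (hx : vs.head? = some x)
    (hz : vs.getLast? = some z) :
    ∃ p : List G.Arc, IsArcWalk x z p ∧ x :: p.map Arc.tgt = vs ∧ p.map Arc.edge = es := by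
  induction h generalizing x with
  | nil v => exact ⟨[], by simp_all [isArcWalk_nil], by simp_all, rfl⟩
  | @cons u w vs e es hinc h ih =>
    obtain rfl : u = x := by simpa using hx
    obtain ⟨p, hp, hvs, rfl⟩ := ih rfl (by simpa using hz)
    exact ⟨⟨u, e, w, hinc⟩ :: p, ⟨rfl, hp⟩, by simp [hvs], rfl⟩

lemma Path.isABPath_first_last (P : G.Path) : G.IsABPath {P.first} {P.last} P := by
  refine ⟨rfl, rfl, fun v hv hvP ↦ ?_⟩
  obtain ⟨vs, hvs⟩ := List.head?_eq_some_iff.1 P.head_eq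
  have hnd := P.nodup
  have hlast := P.getLast_eq
  simp only [Path.inner, hvs, List.drop_one, List.tail_cons] at hv hnd hlast
  have hne : vs ≠ [] := by rintro rfl; simp at hv
  rw [List.getLast?_cons_of_ne_nil hne] at hlast
  obtain ⟨ws, rfl⟩ := List.getLast?_eq_some_iff.1 hlast
  rw [List.dropLast_concat] at hv
  rcases hvP with rfl | rfl
  · exact (List.nodup_cons.1 hnd).1 (List.mem_append_left _ hv)
  · exact (List.nodup_append.1 (List.nodup_cons.1 hnd).2).2.2 _ hv _ (by simp) rfl

lemma IsArcWalk.exists_path (h : IsArcWalk s t p) :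
    ∃ P : G.Path, G.IsABPath {s} {t} P ∧ ∃ q ⊆ p, IsArcWalk s t q ∧ P.edges = q.map Arc.edge := by
  obtain ⟨q, hqp, hq, hnd⟩ := h.exists_nodup
  exact ⟨⟨s, t, _, _, hq.isWalk, hnd, rfl, hq.getLast?_eq⟩, Path.isABPath_first_last _,
    q, hqp, hq, rfl⟩

lemma IsABPath.exists_isArcWalk {P : G.Path} (h : G.IsABPath {s} {t} P) :
    ∃ p : List G.Arc, IsArcWalk s t p ∧ (s :: p.map Arc.tgt).Nodup ∧ p.map Arc.edge = P.edges := by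
  obtain ⟨rfl, rfl, -⟩ := h
  obtain ⟨p, hp, hvs, hes⟩ := P.isWalk.exists_isArcWalk P.head_eq P.getLast_eq
  exact ⟨p, hp, hvs ▸ P.nodup, hes⟩

/-- Each walk leaves `X` exactly once, so that after loop erasure the resulting paths are
orthogonal to the cut of `X`. -/
lemma isEMABCut_edgeCut {X : Set V} {W : Set (List G.Arc)} (hs : s ∈ X) (ht : t ∉ X)
    (hW : ∀ p ∈ W, IsArcWalk s t p ∧ NeverEnters X p) (hdisj : W.PairwiseDisjoint edgeSet)
    (hcov : G.edgeCut X ⊆ edgeUnion W) : G.IsEMABCut {s} {t} (G.edgeCut X) := by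
  have hcut : G.IsABCut {s} {t} (G.edgeCut X) := fun P hP ↦ by
    obtain ⟨p, hp, -, hes⟩ := hP.exists_isArcWalk
    obtain ⟨a, ha, hsrc, htgt⟩ := hp.exists_crossing hs ht
    exact ⟨a.edge, (Arc.edge_mem_edgeCut_of_src_mem hsrc).2 htgt,
      hes ▸ List.mem_map_of_mem ha⟩
  choose P hP q hqp hq hPq using fun p : W ↦ (hW p p.2).1.exists_path
  have hPsub (p : W) : {e | e ∈ (P p).edges} ⊆ edgeSet p.1 := by
    rw [hPq]
    exact edgeSet_subset_edgeSet (hqp p)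
  have hPcross (p : W) : ∃ e, edgeSet (q p) ∩ G.edgeCut X = {e} :=
    let ⟨a, _, h⟩ := (hq p).exists_inter_edgeCut_eq hs ht fun a ha ↦ (hW p p.2).2 a (hqp p ha)
    ⟨a.edge, h⟩
  refine ⟨hcut, Set.range P, ?_, Set.forall_mem_range.2 hP, Set.forall_mem_range.2 fun p ↦ ?_,
    fun e he ↦ ?_⟩
  · rintro _ ⟨p, rfl⟩ _ ⟨p', rfl⟩ hne e he he'
    exact hne (congrArg P (Subtype.ext (hdisj.elim_set p.2 p'.2 e (hPsub p he) (hPsub p' he'))))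
  · obtain ⟨e, he⟩ := hPcross p
    have hiff (e' : E) : e' ∈ G.edgeCut X ∧ e' ∈ (P p).edges ↔ e' = e := by
      rw [hPq, and_comm]
      exact Set.ext_iff.1 he e'
    exact ⟨e, (hiff e).2 rfl, fun e' ↦ (hiff e').1⟩
  · obtain ⟨p, hp, hep⟩ := mem_edgeUnion.1 (hcov he)
    obtain ⟨a, -, hpa⟩ := (hW p hp).1.exists_inter_edgeCut_eq hs ht (hW p hp).2
    obtain ⟨e', hqe⟩ := hPcross ⟨p, hp⟩
    obtain ⟨heq, heX⟩ := hqe.ge rfl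
    obtain rfl : e' = a.edge := hpa.le ⟨edgeSet_subset_edgeSet (hqp _) heq, heX⟩
    obtain rfl : e = a.edge := hpa.le ⟨hep, he⟩
    exact ⟨_, ⟨⟨p, hp⟩, rfl⟩, hPq ⟨p, hp⟩ ▸ heq⟩

end Path

section TrailSystem

variable {S T : Set V} {F F' : Set E} {W W' : Set (List G.Arc)} {p q : List G.Arc}
  {a b : G.Arc} {s t : V}

/-- An `S`–`T` trail: a walk from `S` to `T` which repeats no edge and does not return to `S`. -/
structure IsTrail (G : Grapht V E) (S T : Set V) (p : List G.Arc) : Prop where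
  exists_isArcWalk : ∃ x ∈ S, ∃ z ∈ T, IsArcWalk x z p
  nodup : (p.map Arc.edge).Nodup
  tgt_notMem : ∀ a ∈ p, a.tgt ∉ S

/-- A system of pairwise edge-disjoint `S`–`T` trails using only edges of `F`. -/
structure IsTrailSystem (G : Grapht V E) (S T : Set V) (F : Set E) (W : Set (List G.Arc)) :
    Prop where
  isTrail : ∀ p ∈ W, IsTrail G S T p
  disjoint : W.PairwiseDisjoint edgeSet
  edgeUnion_subset : edgeUnion W ⊆ F

/-- A trail system in `F` that covers all edges of `F` leaving `S`. -/
structure IsLinkage (G : Grapht V E) (S T : Set V) (F : Set E) (W : Set (List G.Arc)) : Prop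
    extends IsTrailSystem G S T F W where
  subset_edgeUnion : G.edgeCut S ∩ F ⊆ edgeUnion W

/-- A trail system in `F` that covers all edges of `F` leaving `S`, with at most one exception. -/
structure IsNearLinkage (G : Grapht V E) (S T : Set V) (F : Set E) (W : Set (List G.Arc)) : Prop
    extends IsTrailSystem G S T F W where
  subsingleton : ((G.edgeCut S ∩ F) \ edgeUnion W).Subsingleton

lemma IsTrail.neverEnters (h : G.IsTrail S T p) : NeverEnters S p :=
  fun a ha haS ↦ absurd haS (h.tgt_notMem a ha)

lemma IsTrail.exists_eq_cons (h : G.IsTrail S T p) (hST : Disjoint S T) :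
    ∃ a q, p = a :: q ∧ a.src ∈ S ∧ a.tgt ∉ S ∧ ∀ b ∈ q, b.src ∉ S ∧ b.tgt ∉ S := by
  obtain ⟨x, hx, z, hz, hp⟩ := h.exists_isArcWalk
  obtain ⟨q, a, r, rfl, hq, ha⟩ :=
    hp.exists_eq_append_cons hx (hST.notMem_of_mem_right hz) h.neverEnters
  obtain rfl : q = [] := List.eq_nil_iff_forall_not_mem.2 fun b hb ↦
    h.tgt_notMem b (List.mem_append_left _ hb) (hq b hb).2
  exact ⟨a, r, rfl, ha⟩

lemma IsTrail.exists_eq_cons_inter_edgeCut (h : G.IsTrail S T p) (hST : Disjoint S T) :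
    ∃ a q, p = a :: q ∧ a.src ∈ S ∧ edgeSet p ∩ G.edgeCut S = {a.edge} := by
  obtain ⟨a, q, rfl, hsrc, htgt, hq⟩ := h.exists_eq_cons hST
  exact ⟨a, q, rfl, hsrc, edgeSet_append_cons_inter_edgeCut (q := []) (by simp)
    ((Arc.edge_mem_edgeCut_of_src_mem hsrc).2 htgt) hq⟩

lemma edgeUnion_union (W W' : Set (List G.Arc)) :
    edgeUnion (W ∪ W') = edgeUnion W ∪ edgeUnion W' :=
  Set.biUnion_union ..

lemma edgeUnion_singleton (p : List G.Arc) : edgeUnion {p} = edgeSet p :=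
  Set.biUnion_singleton ..

lemma IsTrail.isTrailSystem (h : G.IsTrail S T p) : G.IsTrailSystem S T (edgeSet p) {p} :=
  ⟨by simpa using h, Set.pairwiseDisjoint_singleton .., (edgeUnion_singleton p).subset⟩

namespace IsTrailSystem

lemma edgeUnion_diff (h : G.IsTrailSystem S T F W) (hW' : W' ⊆ W) :
    edgeUnion (W \ W') = edgeUnion W \ edgeUnion W' :=
  (Set.biUnion_sdiff_biUnion_eq (by simpa [Set.union_eq_left.2 hW'] using h.disjoint)).symm

lemma edgeUnion_diff_singleton (h : G.IsTrailSystem S T F W) (hp : p ∈ W) :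
    edgeUnion (W \ {p}) = edgeUnion W \ edgeSet p := by
  rw [h.edgeUnion_diff (Set.singleton_subset_iff.2 hp), edgeUnion_singleton]

lemma mono (h : G.IsTrailSystem S T F W) (hF : F ⊆ F') : G.IsTrailSystem S T F' W :=
  ⟨h.isTrail, h.disjoint, h.edgeUnion_subset.trans hF⟩

lemma diff (h : G.IsTrailSystem S T F W) (hW' : W' ⊆ W) :
    G.IsTrailSystem S T (F \ edgeUnion W') (W \ W') where
  isTrail p hp := h.isTrail p hp.1
  disjoint := h.disjoint.subset Set.sdiff_subset
  edgeUnion_subset := h.edgeUnion_diff hW' ▸ Set.sdiff_subset_sdiff_left h.edgeUnion_subset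

lemma union (h : G.IsTrailSystem S T F W) (h' : G.IsTrailSystem S T F' W')
    (hF : Disjoint F F') : G.IsTrailSystem S T (F ∪ F') (W ∪ W') where
  isTrail p hp := hp.elim (h.isTrail p) (h'.isTrail p)
  disjoint := h.disjoint.union h'.disjoint fun _ hp _ hq _ ↦
    hF.mono ((edgeSet_subset_edgeUnion hp).trans h.edgeUnion_subset)
      ((edgeSet_subset_edgeUnion hq).trans h'.edgeUnion_subset)
  edgeUnion_subset := edgeUnion_union W W' ▸
    Set.union_subset_union h.edgeUnion_subset h'.edgeUnion_subset

lemma eq_of_edge_eq (h : G.IsTrailSystem S T F W) (hp : p ∈ W) (hq : q ∈ W) (ha : a ∈ p)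
    (hb : b ∈ q) (hab : a.edge = b.edge) : a = b := by
  obtain rfl : p = q :=
    h.disjoint.elim_set hp hq a.edge (Arc.edge_mem_edgeSet ha) (hab ▸ Arc.edge_mem_edgeSet hb)
  exact List.inj_on_of_nodup_map (h.isTrail p hp).nodup ha hb hab

end IsTrailSystem

lemma IsEMABCut.exists_isLinkage (h : G.IsEMABCut {s} {t} (G.edgeCut {s})) :
    ∃ W, G.IsLinkage {s} {t} Set.univ W := by
  obtain ⟨-, Ps, hdisj, hPs, -, hcov⟩ := h
  choose p hp hnd hes using fun P : Ps ↦ (hPs P P.2).exists_isArcWalk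
  have hmem (P : Ps) (e : E) : e ∈ edgeSet (p P) ↔ e ∈ P.1.edges := by rw [← hes]; rfl
  refine ⟨Set.range p, ⟨⟨Set.forall_mem_range.2 fun P ↦ ?_, ?_, Set.subset_univ _⟩, ?_⟩⟩
  · refine ⟨⟨s, rfl, t, rfl, hp P⟩, (hp P).nodup_map_edge (hnd P), fun a ha has ↦ ?_⟩
    exact (List.nodup_cons.1 (hnd P)).1 (List.mem_map.2 ⟨a, ha, has⟩)
  · rintro _ ⟨P, rfl⟩ _ ⟨Q, rfl⟩ hne
    refine Set.disjoint_left.2 fun e heP heQ ↦ ?_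
    exact hdisj P.2 Q.2 (fun h ↦ hne (congrArg p (Subtype.ext h))) e
      ((hmem P e).1 heP) ((hmem Q e).1 heQ)
  · rintro e ⟨he, -⟩
    obtain ⟨P, hP, heP⟩ := hcov e he
    exact mem_edgeUnion.2 ⟨_, ⟨⟨P, hP⟩, rfl⟩, (hmem ⟨P, hP⟩ e).2 heP⟩

/-- An arc of the grapht obtained by deleting all edges outside `F`, as an arc of `G`. -/
@[simps]
def Arc.ofRestrict (a : (G.restrict F).Arc) : G.Arc := ⟨a.src, a.edge, a.tgt, a.inc⟩

lemma Arc.ofRestrict_injective : Function.Injective (Arc.ofRestrict (G := G) (F := F)) :=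
  fun _ _ h ↦
    let ⟨hs, he, ht⟩ := Arc.ext_iff.1 h
    Arc.ext hs (Subtype.ext he) ht

lemma isArcWalk_map_ofRestrict {x z : V} {p : List (G.restrict F).Arc} :
    IsArcWalk x z (p.map Arc.ofRestrict) ↔ IsArcWalk x z p := by
  induction p generalizing x with
  | nil => rfl
  | cons a p ih => exact and_congr Iff.rfl ih

lemma exists_map_ofRestrict_eq (hp : edgeSet p ⊆ F) :
    ∃ q : List (G.restrict F).Arc, q.map Arc.ofRestrict = p := by
  change p ∈ Set.range (List.map Arc.ofRestrict)
  rw [Set.range_list_map]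
  exact fun a ha ↦ ⟨⟨a.src, ⟨a.edge, hp (Arc.edge_mem_edgeSet ha)⟩, a.tgt, a.inc⟩, rfl⟩

lemma mem_edgeSet_map_ofRestrict {p : List (G.restrict F).Arc} {e : F} :
    (e : E) ∈ edgeSet (p.map Arc.ofRestrict) ↔ e ∈ edgeSet p := by
  simp [mem_edgeSet, Subtype.ext_iff]

lemma IsLinkage.stLinked (h : G.IsLinkage {s} {t} F W) (hst : s ≠ t) :
    (G.restrict F).StLinked s t := by
  have hEM : (G.restrict F).IsEMABCut {s} {t} ((G.restrict F).edgeCut {s}) := by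
    refine isEMABCut_edgeCut (W := {p | p.map Arc.ofRestrict ∈ W}) rfl hst.symm
      (fun p hp ↦ ⟨?_, ?_⟩) (fun p hp q hq hne ↦ Set.disjoint_left.2 fun e hep heq ↦ ?_)
      fun e ⟨u, w, he⟩ ↦ ?_
    · obtain ⟨_, rfl, _, rfl, hw⟩ := (h.isTrail _ hp).exists_isArcWalk
      exact isArcWalk_map_ofRestrict.1 hw
    · exact fun a ha ↦ (h.isTrail _ hp).neverEnters a.ofRestrict (List.mem_map_of_mem ha)
    · exact hne (List.map_injective_iff.2 Arc.ofRestrict_injective (h.disjoint.elim_set hp hq e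
        (mem_edgeSet_map_ofRestrict.2 hep) (mem_edgeSet_map_ofRestrict.2 heq)))
    · obtain ⟨p, hp, hep⟩ := mem_edgeUnion.1 (h.subset_edgeUnion ⟨⟨u, w, he⟩, e.2⟩)
      obtain ⟨q, rfl⟩ := exists_map_ofRestrict_eq
        ((edgeSet_subset_edgeUnion hp).trans h.edgeUnion_subset)
      exact mem_edgeUnion.2 ⟨q, hp, mem_edgeSet_map_ofRestrict.1 hep⟩
  obtain ⟨-, Ps, hdisj, hPs, -, hcov⟩ := hEM
  exact ⟨Ps, hdisj, hPs, hcov⟩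

end TrailSystem

section Flow

variable {S T U : Set V} {A B : Finset G.Arc} {p : List G.Arc} {x z : V}

/-- The arcs of `A` satisfy Kirchhoff's law at all vertices outside `U`. The law is tested against
potentials `f` vanishing on `U`, which avoids counting arcs at single vertices. -/
def IsFlow (U : Set V) (A : Finset G.Arc) : Prop :=
  ∀ f : V → ℤ, (∀ v ∈ U, f v = 0) → ∑ a ∈ A, (f a.tgt - f a.src) = 0

open Classical in
lemma injOn_edge_toFinset (hp : (p.map Arc.edge).Nodup) :
    Set.InjOn Arc.edge (p.toFinset : Set G.Arc) := fun _ ha _ hb ↦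
  List.inj_on_of_nodup_map hp (List.mem_toFinset.1 ha) (List.mem_toFinset.1 hb)

open Classical in
lemma image_edge_toFinset (p : List G.Arc) :
    Arc.edge '' (p.toFinset : Set G.Arc) = edgeSet p := by
  ext e
  simp [mem_edgeSet]

open Classical in
lemma IsArcWalk.isFlow (h : IsArcWalk x z p) (hp : p.Nodup) (hx : x ∈ U) (hz : z ∈ U) :
    IsFlow U p.toFinset := fun f hf ↦ by
  rw [List.sum_toFinset _ hp, h.sum_sub f, hf x hx, hf z hz, sub_zero]

open Classical in
lemma IsFlow.sdiff (hA : IsFlow U A) (hB : IsFlow U B) (hBA : B ⊆ A) : IsFlow U (A \ B) :=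
  fun f hf ↦ by rw [Finset.sum_sdiff_eq_sub hBA, hA f hf, hB f hf, sub_zero]

lemma IsFlow.exists_isTrail (hA : IsFlow (S ∪ T) A) (htgt : ∀ a ∈ A, a.tgt ∉ S)
    (hsrc : ∃ a ∈ A, a.src ∈ S) : ∃ p, G.IsTrail S T p ∧ ∀ a ∈ p, a ∈ A := by
  classical
  let R : Set V := {y | ∃ x ∈ S, ∃ p : List G.Arc, IsArcWalk x y p ∧ ∀ a ∈ p, a ∈ A}
  have hR (a) (ha : a ∈ A) (haR : a.src ∈ R) : a.tgt ∈ R := by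
    obtain ⟨x, hx, p, hp, hpA⟩ := haR
    exact ⟨x, hx, p ++ [a], isArcWalk_append.2 ⟨_, hp, rfl, rfl⟩,
      by simpa [or_imp, forall_and] using ⟨hpA, ha⟩⟩
  have hSR : S ⊆ R := fun x hx ↦ ⟨x, hx, [], rfl, by simp⟩
  suffices hRT : ∃ z ∈ T, z ∈ R by
    obtain ⟨z, hz, x, hx, p, hp, hpA⟩ := hRT
    obtain ⟨q, hqp, hq, hnd⟩ := hp.exists_nodup
    exact ⟨q, ⟨⟨x, hx, z, hz, hq⟩, hq.nodup_map_edge hnd, fun a ha ↦ htgt a (hpA a (hqp ha))⟩,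
      fun a ha ↦ hpA a (hqp ha)⟩
  by_contra! hRT
  let f : V → ℤ := (R \ S).indicator 1
  have hf : ∀ v ∈ S ∪ T, f v = 0 := fun v hv ↦
    Set.indicator_of_notMem (fun hvR ↦ hv.elim hvR.2 fun hvT ↦ hRT v hvT hvR.1) _
  have htgt_one (a) (ha : a ∈ A) (haR : a.src ∈ R) : f a.tgt = 1 :=
    Set.indicator_of_mem (s := R \ S) ⟨hR a ha haR, htgt a ha⟩ _
  obtain ⟨a, ha, haS⟩ := hsrc
  refine (Finset.sum_pos' (fun b hb ↦ ?_) ⟨a, ha, ?_⟩).ne' (hA f hf)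
  · by_cases hbR : b.src ∈ R
    · simpa [htgt_one b hb hbR] using Set.indicator_apply_le' (by simp) (by simp)
    · simpa [f, hbR] using Set.indicator_nonneg (by simp) _
  · simp [htgt_one a ha (hSR haS), hf _ (.inl haS)]

lemma IsFlow.exists_isTrailSystem (hST : Disjoint S T) (hA : IsFlow (S ∪ T) A)
    (hinj : Set.InjOn Arc.edge (A : Set G.Arc)) (htgt : ∀ a ∈ A, a.tgt ∉ S) :
    ∃ W, G.IsTrailSystem S T (Arc.edge '' (A : Set G.Arc)) W ∧
      ∀ a ∈ A, a.src ∈ S → a.edge ∈ edgeUnion W := by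
  classical
  induction A using Finset.strongInduction with
  | H A ih =>
    by_cases hsrc : ∃ a ∈ A, a.src ∈ S
    swap
    · exact ⟨∅, ⟨by simp, by simp, by simp [edgeUnion]⟩, fun a ha haS ↦ absurd ⟨a, ha, haS⟩ hsrc⟩
    obtain ⟨p, hp, hpA⟩ := hA.exists_isTrail htgt hsrc
    have hpA' : p.toFinset ⊆ A := fun a ha ↦ hpA a (List.mem_toFinset.1 ha)
    obtain ⟨x, hx, z, hz, hw⟩ := hp.exists_isArcWalk
    obtain ⟨b, q, hbq, -⟩ := hp.exists_eq_cons hST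
    have hlt : A \ p.toFinset ⊂ A := Finset.sdiff_ssubset hpA' ⟨b, by simp [hbq]⟩
    have hflow : IsFlow (S ∪ T) (A \ p.toFinset) :=
      hA.sdiff (hw.isFlow hp.nodup.of_map (.inl hx) (.inr hz)) hpA'
    obtain ⟨W, hW, hcov⟩ := ih _ hlt hflow (hinj.mono (Finset.coe_subset.2 hlt.subset))
      fun a ha ↦ htgt a (hlt.subset ha)
    have hsplit : Arc.edge '' (A : Set G.Arc) =
        Arc.edge '' ((A \ p.toFinset : Finset G.Arc) : Set G.Arc) ∪ edgeSet p := by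
      rw [← image_edge_toFinset, ← Set.image_union, ← Finset.coe_union,
        Finset.sdiff_union_of_subset hpA']
    have hdisj : Disjoint (Arc.edge '' ((A \ p.toFinset : Finset G.Arc) : Set G.Arc))
        (edgeSet p) := by
      rw [← image_edge_toFinset]
      exact (Finset.disjoint_coe.2 Finset.sdiff_disjoint).image hinj
        (Finset.coe_subset.2 hlt.subset) (Finset.coe_subset.2 hpA')
    refine ⟨W ∪ {p}, hsplit ▸ hW.union hp.isTrailSystem hdisj, fun a ha haS ↦ ?_⟩
    rw [edgeUnion_union, edgeUnion_singleton]
    by_cases hap : a ∈ p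
    · exact .inr (Arc.edge_mem_edgeSet hap)
    · exact .inl (hcov a (by simp [ha, hap]) haS)

end Flow

section Augment

open Classical in
/-- The sum of two finite sets of arcs, opposite arcs being cancelled against each other. -/
noncomputable def augment (A B : Finset G.Arc) : Finset G.Arc :=
  A.filter (·.rev ∉ B) ∪ B.filter (·.rev ∉ A)

variable {U : Set V} {A B : Finset G.Arc} {a : G.Arc}

lemma mem_augment : a ∈ augment A B ↔ a ∈ A ∧ a.rev ∉ B ∨ a ∈ B ∧ a.rev ∉ A := by
  classical simp [augment]

lemma IsFlow.augment (hA : IsFlow U A) (hB : IsFlow U B) (hAB : Disjoint A B) :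
    IsFlow U (augment A B) := fun f hf ↦ by
  classical
  have hcancel : ∑ a ∈ A with a.rev ∈ B, (f a.tgt - f a.src) =
      -∑ b ∈ B with b.rev ∈ A, (f b.tgt - f b.src) := by
    rw [← Finset.sum_neg_distrib]
    exact Finset.sum_nbij' Arc.rev Arc.rev (by simp +contextual) (by simp +contextual)
      (by simp) (by simp) (by simp)
  have hA' := Finset.sum_filter_add_sum_filter_not A (·.rev ∈ B) fun a ↦ f a.tgt - f a.src
  have hB' := Finset.sum_filter_add_sum_filter_not B (·.rev ∈ A) fun a ↦ f a.tgt - f a.src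
  rw [Grapht.augment, Finset.sum_union (Finset.disjoint_filter_filter hAB)]
  linarith [hA f hf, hB f hf]

lemma injOn_edge_augment (hA : Set.InjOn Arc.edge (A : Set G.Arc))
    (hB : Set.InjOn Arc.edge (B : Set G.Arc)) (hAB : Disjoint A B) :
    Set.InjOn Arc.edge (augment A B : Set G.Arc) := by
  have hne {a b : G.Arc} (ha : a ∈ A) (hb : b ∈ B) (hb' : b.rev ∉ A) : a.edge ≠ b.edge := by
    intro hab
    rcases Arc.eq_or_eq_rev hab with rfl | rfl
    · exact Finset.disjoint_left.1 hAB ha hb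
    · exact hb' ha
  intro a ha b hb hab
  rcases mem_augment.1 ha with ⟨ha, -⟩ | ⟨ha, ha'⟩ <;>
    rcases mem_augment.1 hb with ⟨hb, -⟩ | ⟨hb, hb'⟩
  · exact hA ha hb hab
  · exact absurd hab (hne ha hb hb')
  · exact absurd hab.symm (hne hb ha ha')
  · exact hB ha hb hab

end Augment

section Residual

variable {S T : Set V} {F : Set E} {W : Set (List G.Arc)} {W₀ : Finset (List G.Arc)}
  {p : List G.Arc} {x z : V} {a : G.Arc}

/-- An arc is residual for the family `W` if its edge is not used by `W` and does not lead into
`S`, or if a member of `W` traverses it in the opposite direction. -/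
def IsResidual (S : Set V) (W : Set (List G.Arc)) (a : G.Arc) : Prop :=
  a.edge ∉ edgeUnion W ∧ a.tgt ∉ S ∨ ∃ p ∈ W, a.rev ∈ p

lemma IsTrailSystem.finite_setOf_not_disjoint (hW : G.IsTrailSystem S T F W)
    (p : List G.Arc) : {l ∈ W | ¬Disjoint (edgeSet l) (edgeSet p)}.Finite := by
  have hsub : {l ∈ W | ¬Disjoint (edgeSet l) (edgeSet p)} ⊆
      ⋃ e ∈ edgeSet p, {l ∈ W | e ∈ edgeSet l} := fun l ⟨hl, hlp⟩ ↦ by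
    obtain ⟨e, hel, hep⟩ := Set.not_disjoint_iff.1 hlp
    exact Set.mem_biUnion hep ⟨hl, hel⟩
  refine ((List.finite_toSet (p.map Arc.edge)).biUnion fun e _ ↦ ?_).subset hsub
  exact Set.Subsingleton.finite fun l hl l' hl' ↦ hW.disjoint.elim_set hl.1 hl'.1 e hl.2 hl'.2

open Classical in
/-- The finite set of all arcs occurring in a finite family of lists. -/
noncomputable def arcFinset (W₀ : Finset (List G.Arc)) : Finset G.Arc :=
  W₀.biUnion List.toFinset

lemma mem_arcFinset : a ∈ arcFinset W₀ ↔ ∃ l ∈ W₀, a ∈ l := by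
  classical simp [arcFinset]

lemma image_edge_arcFinset (W₀ : Finset (List G.Arc)) :
    Arc.edge '' (arcFinset W₀ : Set G.Arc) = edgeUnion (W₀ : Set (List G.Arc)) := by
  ext e
  simp only [Set.mem_image, Finset.mem_coe, mem_arcFinset, mem_edgeUnion, mem_edgeSet]
  tauto

lemma IsTrailSystem.isFlow_arcFinset (hW : G.IsTrailSystem S T F W₀) :
    IsFlow (S ∪ T) (arcFinset W₀) := fun f hf ↦ by
  classical
  rw [arcFinset, Finset.sum_biUnion]
  · refine Finset.sum_eq_zero fun l hl ↦ ?_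
    obtain ⟨x, hx, z, hz, hl'⟩ := (hW.isTrail l hl).exists_isArcWalk
    exact hl'.isFlow (hW.isTrail l hl).nodup.of_map (.inl hx) (.inr hz) f hf
  · intro l hl l' hl' hne
    refine Finset.disjoint_left.2 fun a ha ha' ↦ hne ?_
    exact hW.disjoint.elim_set hl hl' a.edge (Arc.edge_mem_edgeSet (List.mem_toFinset.1 ha))
      (Arc.edge_mem_edgeSet (List.mem_toFinset.1 ha'))

lemma IsTrailSystem.injOn_edge_arcFinset (hW : G.IsTrailSystem S T F W₀) :
    Set.InjOn Arc.edge (arcFinset W₀ : Set G.Arc) := fun _ ha _ hb hab ↦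
  let ⟨_, hl, hal⟩ := mem_arcFinset.1 ha
  let ⟨_, hl', hbl'⟩ := mem_arcFinset.1 hb
  hW.eq_of_edge_eq hl hl' hal hbl' hab

lemma IsResidual.of_rev_notMem_arcFinset (ha : IsResidual S (W₀ : Set (List G.Arc)) a)
    (hrev : a.rev ∉ arcFinset W₀) :
    a.edge ∉ Arc.edge '' (arcFinset W₀ : Set G.Arc) ∧ a.tgt ∉ S :=
  image_edge_arcFinset W₀ ▸ ha.resolve_right fun h ↦ hrev (mem_arcFinset.2 h)

lemma IsResidual.notMem_arcFinset (ha : IsResidual S (W₀ : Set (List G.Arc)) a)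
    (hW : G.IsTrailSystem S T F W₀) : a ∉ arcFinset W₀ := fun haW ↦ by
  have hrev : a.rev ∈ arcFinset W₀ := by
    by_contra h
    exact (ha.of_rev_notMem_arcFinset h).1 ⟨a, haW, rfl⟩
  exact a.rev_ne (hW.injOn_edge_arcFinset hrev haW rfl)

lemma IsTrailSystem.exists_augment_of_finset (hST : Disjoint S T)
    (hW : G.IsTrailSystem S T F W₀) (hp : IsArcWalk x z p) (hnd : (p.map Arc.edge).Nodup)
    (hx : x ∈ S ∪ T) (hz : z ∈ S ∪ T) (hres : ∀ a ∈ p, IsResidual S (W₀ : Set (List G.Arc)) a) :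
    ∃ D, G.IsTrailSystem S T (edgeUnion (W₀ : Set (List G.Arc)) ∪ edgeSet p) D ∧
      ∀ e ∈ G.edgeCut S, Xor (e ∈ edgeUnion (W₀ : Set (List G.Arc))) (e ∈ edgeSet p) →
        e ∈ edgeUnion D := by
  classical
  have hres' (a) (ha : a ∈ p.toFinset) : IsResidual S (W₀ : Set (List G.Arc)) a :=
    hres a (List.mem_toFinset.1 ha)
  have hdisj : Disjoint (arcFinset W₀) p.toFinset :=
    Finset.disjoint_right.2 fun a ha ↦ (hres' a ha).notMem_arcFinset hW
  have htgt : ∀ a ∈ augment (arcFinset W₀) p.toFinset, a.tgt ∉ S := fun a ha ↦ by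
    rcases mem_augment.1 ha with ⟨ha, -⟩ | ⟨ha, ha'⟩
    · obtain ⟨l, hl, hal⟩ := mem_arcFinset.1 ha
      exact (hW.isTrail l hl).tgt_notMem a hal
    · exact ((hres' a ha).of_rev_notMem_arcFinset ha').2
  obtain ⟨D, hD, hcov⟩ := IsFlow.exists_isTrailSystem hST
    (hW.isFlow_arcFinset.augment (hp.isFlow hnd.of_map hx hz) hdisj)
    (injOn_edge_augment hW.injOn_edge_arcFinset (injOn_edge_toFinset hnd) hdisj) htgt
  rw [← image_edge_arcFinset, ← image_edge_toFinset]
  refine ⟨D, hD.mono ?_, fun e he hxor ↦ ?_⟩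
  · rw [← Set.image_union]
    exact Set.image_mono fun a ha ↦ (mem_augment.1 ha).imp And.left And.left
  · suffices ∃ a ∈ augment (arcFinset W₀) p.toFinset, a.edge = e by
      obtain ⟨a, ha, rfl⟩ := this
      exact hcov a ha ((Arc.edge_mem_edgeCut_of_tgt_notMem (htgt a ha)).1 he)
    rcases hxor with ⟨⟨a, ha, rfl⟩, hap⟩ | ⟨⟨a, ha, rfl⟩, haW⟩
    · exact ⟨a, mem_augment.2 (.inl ⟨ha, fun h ↦ hap ⟨a.rev, h, rfl⟩⟩), rfl⟩
    · exact ⟨a, mem_augment.2 (.inr ⟨ha, fun h ↦ haW ⟨a.rev, h, rfl⟩⟩), rfl⟩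

/-- Only the finitely many members of `W` meeting `p` have to be replaced. -/
lemma IsTrailSystem.exists_augment (hST : Disjoint S T) (hW : G.IsTrailSystem S T F W)
    (hp : IsArcWalk x z p) (hnd : (p.map Arc.edge).Nodup) (hx : x ∈ S ∪ T) (hz : z ∈ S ∪ T)
    (hpF : edgeSet p ⊆ F) (hres : ∀ a ∈ p, IsResidual S W a) :
    ∃ W', G.IsTrailSystem S T F W' ∧
      ∀ e ∈ G.edgeCut S, Xor (e ∈ edgeUnion W) (e ∈ edgeSet p) → e ∈ edgeUnion W' := by
  have hfin := hW.finite_setOf_not_disjoint p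
  obtain ⟨W₀, hW₀⟩ : ∃ W₀ : Finset (List G.Arc),
      (W₀ : Set (List G.Arc)) = {l ∈ W | ¬Disjoint (edgeSet l) (edgeSet p)} :=
    ⟨hfin.toFinset, hfin.coe_toFinset⟩
  have hsub : (W₀ : Set (List G.Arc)) ⊆ W := hW₀ ▸ Set.sep_subset ..
  have hoff (l) (hl : l ∈ W) (hlW₀ : l ∉ W₀) : Disjoint (edgeSet l) (edgeSet p) := by
    by_contra h
    exact hlW₀ (Finset.mem_coe.1 (hW₀ ▸ ⟨hl, h⟩))
  have hkeep := hW.diff hsub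
  have hdisj : Disjoint (edgeUnion (W \ W₀)) (edgeUnion (W₀ : Set (List G.Arc)) ∪ edgeSet p) := by
    refine Set.disjoint_union_right.2 ⟨hW.edgeUnion_diff hsub ▸ Set.disjoint_sdiff_left, ?_⟩
    exact Set.disjoint_iUnion₂_left.2 fun l hl ↦ hoff l hl.1 hl.2
  have hsplit : edgeUnion W = edgeUnion (W \ W₀) ∪ edgeUnion (W₀ : Set (List G.Arc)) := by
    rw [← edgeUnion_union, Set.sdiff_union_of_subset hsub]
  have hWsub : edgeUnion (W₀ : Set (List G.Arc)) ⊆ edgeUnion W := hsplit ▸ Set.subset_union_right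
  obtain ⟨D, hD, hcov⟩ := IsTrailSystem.exists_augment_of_finset hST
    (⟨fun l hl ↦ hW.isTrail l (hsub hl), hW.disjoint.subset hsub, subset_rfl⟩ :
      G.IsTrailSystem S T (edgeUnion (W₀ : Set (List G.Arc))) W₀) hp hnd hx hz
    fun a ha ↦ (hres a ha).imp (fun h ↦ ⟨fun h' ↦ h.1 (hWsub h'), h.2⟩) fun ⟨l, hl, hal⟩ ↦
      ⟨l, hW₀.symm ▸ ⟨hl, Set.not_disjoint_iff.2
        ⟨a.edge, Arc.edge_mem_edgeSet (a := a.rev) hal, Arc.edge_mem_edgeSet ha⟩⟩, hal⟩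
  refine ⟨W \ W₀ ∪ D, ((⟨hkeep.isTrail, hkeep.disjoint, subset_rfl⟩ :
    G.IsTrailSystem S T (edgeUnion (W \ W₀)) _).union hD hdisj).mono ?_, fun e he hxor ↦ ?_⟩
  · rw [← Set.union_assoc, ← hsplit]
    exact Set.union_subset hW.edgeUnion_subset hpF
  · rw [edgeUnion_union]
    by_cases hek : e ∈ edgeUnion (W \ W₀)
    · exact .inl hek
    · refine .inr (hcov e he ?_)
      simpa [hsplit, hek] using hxor

end Residual

section Reach

variable {S T : Set V} {F F' : Set E} {W : Set (List G.Arc)} {p l : List G.Arc} {x z : V}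
  {a : G.Arc} {g : E}

/-- The vertices reachable from `S` along residual arcs with edges in `F`, without returning
to `S`. -/
def residualReach (S : Set V) (F : Set E) (W : Set (List G.Arc)) : Set V :=
  {x | ∃ s ∈ S, ∃ p : List G.Arc, IsArcWalk s x p ∧
    ∀ a ∈ p, a.edge ∈ F ∧ IsResidual S W a ∧ a.tgt ∉ S}

lemma subset_residualReach : S ⊆ residualReach S F W := fun s hs ↦ ⟨s, hs, [], rfl, by simp⟩

lemma IsResidual.tgt_mem_residualReach (ha : IsResidual S W a) (haF : a.edge ∈ F)
    (hsrc : a.src ∈ residualReach S F W) : a.tgt ∈ residualReach S F W := by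
  by_cases haS : a.tgt ∈ S
  · exact subset_residualReach haS
  obtain ⟨s, hs, p, hp, hpa⟩ := hsrc
  refine ⟨s, hs, p ++ [a], isArcWalk_append.2 ⟨_, hp, rfl, rfl⟩, fun b hb ↦ ?_⟩
  rcases List.mem_append.1 hb with hb | hb
  · exact hpa b hb
  · obtain rfl := List.mem_singleton.1 hb
    exact ⟨haF, ha, haS⟩

lemma IsResidual.notMem_edgeUnion (ha : IsResidual S W a) (hW : G.IsTrailSystem S T F W)
    (hsrc : a.src ∈ S) : a.edge ∉ edgeUnion W := by
  rcases ha with ⟨h, -⟩ | ⟨p, hp, hap⟩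
  · exact h
  · exact absurd hsrc ((hW.isTrail p hp).tgt_notMem a.rev hap)

lemma edgeCut_residualReach_inter_subset :
    G.edgeCut (residualReach S F W) ∩ F ⊆ edgeUnion W := fun e ⟨he, heF⟩ ↦ by
  obtain ⟨a, rfl, hsrc, htgt⟩ := exists_arc_of_mem_edgeCut he
  by_contra h
  exact htgt (IsResidual.tgt_mem_residualReach
    (.inl ⟨h, fun haS ↦ htgt (subset_residualReach haS)⟩) heF hsrc)

lemma IsTrailSystem.neverEnters_residualReach (hW : G.IsTrailSystem S T F W) (hp : p ∈ W) :
    NeverEnters (residualReach S F W) p := fun a ha ↦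
  IsResidual.tgt_mem_residualReach (a := a.rev) (.inr ⟨p, hp, ha⟩)
    (hW.edgeUnion_subset (edgeSet_subset_edgeUnion hp (Arc.edge_mem_edgeSet (a := a) ha)))

lemma exists_nodup_of_mem_residualReach (hz : z ∈ residualReach S F W) :
    ∃ s ∈ S, ∃ p : List G.Arc, IsArcWalk s z p ∧ (p.map Arc.edge).Nodup ∧
      ∀ a ∈ p, a.edge ∈ F ∧ IsResidual S W a ∧ a.tgt ∉ S := by
  obtain ⟨s, hs, p, hp, hpa⟩ := hz
  obtain ⟨q, hqp, hq, hnd⟩ := hp.exists_nodup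
  exact ⟨s, hs, q, hq, hq.nodup_map_edge hnd, fun a ha ↦ hpa a (hqp ha)⟩

lemma IsNearLinkage.xor_mem_edgeUnion_edgeSet (hW : G.IsNearLinkage S T F W)
    (hp : IsArcWalk x z p) (hx : x ∈ S) (hz : z ∉ S)
    (hpa : ∀ a ∈ p, a.edge ∈ F ∧ IsResidual S W a ∧ a.tgt ∉ S) :
    ∀ e ∈ G.edgeCut S ∩ F, Xor (e ∈ edgeUnion W) (e ∈ edgeSet p) := by
  have huncov : ∀ e ∈ G.edgeCut S ∩ edgeSet p, e ∉ edgeUnion W := by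
    rintro e ⟨heS, hep⟩
    obtain ⟨a, ha, rfl⟩ := mem_edgeSet.1 hep
    exact (hpa a ha).2.1.notMem_edgeUnion hW.toIsTrailSystem
      ((Arc.edge_mem_edgeCut_of_tgt_notMem (hpa a ha).2.2).1 heS)
  obtain ⟨a, ha, hsrc, htgt⟩ := hp.exists_crossing hx hz
  have haS := (Arc.edge_mem_edgeCut_of_src_mem hsrc).2 htgt
  have hap := Arc.edge_mem_edgeSet ha
  rintro e ⟨heS, heF⟩
  by_cases heW : e ∈ edgeUnion W
  · exact .inl ⟨heW, fun hep ↦ huncov e ⟨heS, hep⟩ heW⟩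
  · obtain rfl := hW.subsingleton ⟨⟨heS, heF⟩, heW⟩
      ⟨⟨haS, (hpa a ha).1⟩, huncov _ ⟨haS, hap⟩⟩
    exact .inr ⟨hap, heW⟩

lemma IsNearLinkage.exists_isLinkage (hST : Disjoint S T) (hW : G.IsNearLinkage S T F W)
    (hT : (residualReach S F W ∩ T).Nonempty) : ∃ W', G.IsLinkage S T F W' := by
  obtain ⟨z, hzreach, hz⟩ := hT
  obtain ⟨s, hs, p, hp, hnd, hpa⟩ := exists_nodup_of_mem_residualReach hzreach
  obtain ⟨W', hW', hcov⟩ := hW.exists_augment hST hp hnd (.inl hs) (.inr hz)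
    (edgeSet_subset_iff.2 fun a ha ↦ (hpa a ha).1) fun a ha ↦ (hpa a ha).2.1
  exact ⟨W', hW', fun e he ↦ hcov e he.1 (hW.xor_mem_edgeUnion_edgeSet hp hs
    (hST.notMem_of_mem_right hz) hpa e he)⟩

/-- A residual walk to the second vertex of a trail can be closed up by the reverse of the first
arc of that trail. -/
lemma IsNearLinkage.exists_diff_singleton_subset_edgeUnion (hST : Disjoint S T)
    (hW : G.IsNearLinkage S T F W) (hl : l ∈ W) (hal : a ∈ l) (hsrc : a.src ∈ S)
    (htgt : a.tgt ∈ residualReach S F W) :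
    ∃ W', G.IsTrailSystem S T F W' ∧ (G.edgeCut S ∩ F) \ {a.edge} ⊆ edgeUnion W' := by
  obtain ⟨s, hs, p, hp, hnd, hpa⟩ := exists_nodup_of_mem_residualReach htgt
  have haW : a.edge ∈ edgeUnion W := edgeSet_subset_edgeUnion hl (Arc.edge_mem_edgeSet hal)
  have haS : a.tgt ∉ S := (hW.isTrail l hl).tgt_notMem a hal
  have hxor := hW.xor_mem_edgeUnion_edgeSet hp hs haS hpa
  have hap : a.edge ∉ edgeSet p := fun hap ↦
    ((xor_iff_iff_not.1 (hxor a.edge ⟨(Arc.edge_mem_edgeCut_of_src_mem hsrc).2 haS,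
      hW.edgeUnion_subset haW⟩)).1 haW) hap
  have hpa' : ∀ b ∈ p ++ [a.rev], b.edge ∈ F ∧ IsResidual S W b := by
    intro b hb
    rcases List.mem_append.1 hb with hb | hb
    · exact ⟨(hpa b hb).1, (hpa b hb).2.1⟩
    · obtain rfl := List.mem_singleton.1 hb
      exact ⟨hW.edgeUnion_subset haW, .inr ⟨l, hl, hal⟩⟩
  obtain ⟨W', hW', hcov⟩ := hW.exists_augment hST (p := p ++ [a.rev])
    (isArcWalk_append.2 ⟨_, hp, rfl, rfl⟩) (by
      rw [List.map_append]
      exact hnd.append (List.nodup_singleton _) (by simpa [edgeSet] using hap))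
    (.inl hs) (.inl hsrc) (edgeSet_subset_iff.2 fun b hb ↦ (hpa' b hb).1)
    fun b hb ↦ (hpa' b hb).2
  refine ⟨W', hW', fun e ⟨he, hea⟩ ↦ hcov e he.1 ?_⟩
  have hmem : e ∈ edgeSet (p ++ [a.rev]) ↔ e ∈ edgeSet p := by
    simp [edgeSet, show e ≠ a.edge from hea]
  rw [hmem]
  exact hxor e he

lemma IsTrailSystem.edgeCut_residualReach_diff_inter_subset (hST : Disjoint S T)
    (hW : G.IsTrailSystem S T F W)
    (hno : ∀ p ∈ W, ∀ a ∈ p, a.src ∈ S → a.tgt ∉ residualReach S F W) :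
    G.edgeCut (residualReach S F W \ S) ∩ F ⊆ (G.edgeCut S ∩ F) \ edgeUnion W := by
  rintro e ⟨he, heF⟩
  obtain ⟨b, rfl, ⟨hbX, hbS⟩, htgt⟩ := exists_arc_of_mem_edgeCut he
  by_cases hbX' : b.tgt ∈ residualReach S F W
  · have hbS' : b.rev.src ∈ S := by_contra fun h ↦ htgt ⟨hbX', h⟩
    refine ⟨⟨(Arc.edge_mem_edgeCut_of_src_mem hbS').2 hbS, heF⟩, fun hbW ↦ ?_⟩
    obtain ⟨p, hp, hbp⟩ := mem_edgeUnion.1 hbW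
    obtain ⟨c, hc, hcb⟩ := mem_edgeSet.1 hbp
    rcases Arc.eq_or_eq_rev hcb with rfl | rfl
    · exact (hW.isTrail p hp).tgt_notMem c hc hbS'
    · exact hno p hp b.rev hc hbS' hbX
  · have hbcut := (Arc.edge_mem_edgeCut_of_src_mem hbX).2 hbX'
    obtain ⟨p, hp, hbp⟩ := mem_edgeUnion.1 (edgeCut_residualReach_inter_subset ⟨hbcut, heF⟩)
    obtain ⟨_, -, _, -, hwalk⟩ := (hW.isTrail p hp).exists_isArcWalk
    obtain ⟨a, q, rfl, haS, -⟩ := (hW.isTrail p hp).exists_eq_cons hST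
    have haX := hno _ hp a List.mem_cons_self haS
    have hq := hwalk.2.src_mem_and_tgt_mem (X := (residualReach S F W)ᶜ) haX
      fun c hc hcX ↦ mt (hW.neverEnters_residualReach hp c (List.mem_cons_of_mem a hc)) hcX
    have hba : b.edge = a.edge := (edgeSet_append_cons_inter_edgeCut (q := []) (by simp)
      ((Arc.edge_mem_edgeCut_of_src_mem (subset_residualReach haS)).2 haX) hq).le ⟨hbp, hbcut⟩
    rcases Arc.eq_or_eq_rev hba with rfl | rfl
    · exact absurd haS hbS
    · exact absurd (subset_residualReach haS) hbX'

lemma IsLinkage.isNearLinkage_diff_singleton (hW : G.IsLinkage S T F W) (hST : Disjoint S T)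
    (hl : l ∈ W) (hF : F \ edgeSet l ⊆ F') (hF' : F' ⊆ F) :
    G.IsNearLinkage S T F' (W \ {l}) := by
  have hsys := hW.diff (Set.singleton_subset_iff.2 hl)
  rw [edgeUnion_singleton] at hsys
  obtain ⟨a, q, -, -, hal⟩ := (hW.isTrail l hl).exists_eq_cons_inter_edgeCut hST
  refine ⟨hsys.mono hF, (Set.subsingleton_singleton (a := a.edge)).anti ?_⟩
  rintro e ⟨⟨heS, heF⟩, heW⟩
  rw [hW.edgeUnion_diff_singleton hl] at heW
  have hel : e ∈ edgeSet l := by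
    by_contra h
    exact heW ⟨hW.subset_edgeUnion ⟨heS, hF' heF⟩, h⟩
  exact hal.le ⟨hel, heS⟩

lemma IsLinkage.edgeSet_inter_edgeCut_residualReach_subset (hW : G.IsLinkage S T F W)
    (hl : l ∈ W) (g : E) :
    edgeSet l ∩ G.edgeCut (residualReach S (F \ {g}) (W \ {l})) ⊆ {g} := fun e ⟨hel, heX⟩ ↦ by
  by_contra heg
  have heW : e ∈ edgeUnion (W \ {l}) := edgeCut_residualReach_inter_subset
    ⟨heX, hW.edgeUnion_subset (edgeSet_subset_edgeUnion hl hel), heg⟩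
  rw [hW.edgeUnion_diff_singleton hl] at heW
  exact heW.2 hel

lemma IsLinkage.diff_singleton_of_notMem (hW : G.IsLinkage S T F W) (hg : g ∉ edgeUnion W) :
    G.IsLinkage S T (F \ {g}) W where
  isTrail := hW.isTrail
  disjoint := hW.disjoint
  edgeUnion_subset _ he := ⟨hW.edgeUnion_subset he, fun heg ↦ hg (heg ▸ he)⟩
  subset_edgeUnion _ he := hW.subset_edgeUnion ⟨he.1, he.2.1⟩

lemma IsLinkage.diff_singleton_of_mem_edgeCut (hW : G.IsLinkage S T F W) (hST : Disjoint S T)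
    (hl : l ∈ W) (hgl : g ∈ edgeSet l) (hgS : g ∈ G.edgeCut S) :
    G.IsLinkage S T (F \ {g}) (W \ {l}) where
  toIsTrailSystem := (hW.isNearLinkage_diff_singleton hST hl (Set.sdiff_subset_sdiff_right
    (Set.singleton_subset_iff.2 hgl)) Set.sdiff_subset).toIsTrailSystem
  subset_edgeUnion := by
    obtain ⟨a, q, -, -, ha⟩ := (hW.isTrail l hl).exists_eq_cons_inter_edgeCut hST
    rintro e ⟨heS, heF, heg⟩
    rw [hW.edgeUnion_diff_singleton hl]
    refine ⟨hW.subset_edgeUnion ⟨heS, heF⟩, fun hel ↦ heg ?_⟩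
    exact (ha.le ⟨hel, heS⟩).trans (ha.le ⟨hgl, hgS⟩).symm

lemma IsLinkage.exists_isLinkage_diff_singleton_or (hST : Disjoint S T)
    (hW : G.IsLinkage S T F W) (g : E) :
    (∃ W', G.IsLinkage S T (F \ {g}) W') ∨
      ∃ X, S ⊆ X ∧ Disjoint X T ∧ g ∈ G.edgeCut X ∧ g ∉ G.edgeCut S ∧
        G.edgeCut X ∩ F ⊆ edgeUnion W ∧ ∀ p ∈ W, NeverEnters X p := by
  refine or_iff_not_imp_left.2 fun hno ↦ ?_
  obtain ⟨l, hl, hgl⟩ : ∃ l ∈ W, g ∈ edgeSet l := by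
    by_contra h
    exact hno ⟨W, hW.diff_singleton_of_notMem (mt mem_edgeUnion.1 h)⟩
  have hnear : G.IsNearLinkage S T (F \ {g}) (W \ {l}) :=
    hW.isNearLinkage_diff_singleton hST hl
      (Set.sdiff_subset_sdiff_right (Set.singleton_subset_iff.2 hgl)) Set.sdiff_subset
  let X := residualReach S (F \ {g}) (W \ {l})
  have hXT : Disjoint X T := by
    by_contra h
    exact hno (hnear.exists_isLinkage hST (Set.not_disjoint_iff_nonempty_inter.1 h))
  have hlX : edgeSet l ∩ G.edgeCut X ⊆ {g} := hW.edgeSet_inter_edgeCut_residualReach_subset hl g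
  obtain ⟨x, hx, z, hz, hwalk⟩ := (hW.isTrail l hl).exists_isArcWalk
  obtain ⟨c, hc, hsrc, htgt⟩ :=
    hwalk.exists_crossing (subset_residualReach hx) (hXT.notMem_of_mem_right hz)
  have hcX := (Arc.edge_mem_edgeCut_of_src_mem hsrc).2 htgt
  obtain rfl : c.edge = g := hlX ⟨Arc.edge_mem_edgeSet hc, hcX⟩
  refine ⟨X, subset_residualReach, hXT, hcX, fun hcS ↦
    hno ⟨_, hW.diff_singleton_of_mem_edgeCut hST hl hgl hcS⟩, fun e ⟨heX, heF⟩ ↦ ?_, fun p hp ↦ ?_⟩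
  · by_cases hec : e = c.edge
    · exact hec ▸ edgeSet_subset_edgeUnion hl hgl
    · exact hW.edgeUnion_diff_singleton hl ▸ (edgeCut_residualReach_inter_subset
        (W := W \ {l}) ⟨heX, heF, hec⟩) |>.1
  · by_cases hpl : p = l
    · subst hpl
      intro b hb hbtgt
      by_contra hbsrc
      have hbX : b.edge ∈ G.edgeCut X :=
        (Arc.edge_mem_edgeCut_of_tgt_notMem (a := b.rev) hbsrc).2 hbtgt
      obtain rfl := List.inj_on_of_nodup_map (hW.isTrail p hl).nodup hb hc
        (hlX ⟨Arc.edge_mem_edgeSet hb, hbX⟩)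
      exact hbsrc hsrc
    · exact hnear.neverEnters_residualReach ⟨hp, hpl⟩

end Reach

section Parity

variable {S T U : Set V} {F : Set E} {W : Set (List G.Arc)} {p l : List G.Arc} {x z : V}
  {e : E}

/-- The grapht with terminal set `U` and only the edges of `F` is inner Eulerian. -/
def InnerEulerianOn (G : Grapht V E) (U : Set V) (F : Set E) : Prop :=
  ∀ Y : Set V, Disjoint Y U → ¬((G.edgeCut Y ∩ F).Finite ∧ Odd (G.edgeCut Y ∩ F).ncard)

lemma InnerEulerian.innerEulerianOn (h : G.InnerEulerian) : G.InnerEulerianOn G.T Set.univ :=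
  fun Y hY ↦ by simpa only [Set.inter_univ] using h Y hY

lemma InnerEulerianOn.mono {U' : Set V} (h : G.InnerEulerianOn U F) (hU : U ⊆ U') :
    G.InnerEulerianOn U' F :=
  fun Y hY ↦ h Y (hY.mono_right hU)

lemma IsArcWalk.odd_ncard_edgeSet_inter_edgeCut (h : IsArcWalk x z p)
    (hp : (p.map Arc.edge).Nodup) (Y : Set V) :
    Odd (edgeSet p ∩ G.edgeCut Y).ncard ↔ ¬(x ∈ Y ↔ z ∈ Y) := by
  induction p generalizing x with
  | nil => simp [edgeSet, isArcWalk_nil.1 h]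
  | cons a p ih =>
    obtain ⟨rfl, h⟩ := h
    obtain ⟨hap, hp⟩ := List.nodup_cons.1 hp
    have hcons : edgeSet (a :: p) = insert a.edge (edgeSet p) := by ext; simp [edgeSet]
    have hfin : (edgeSet p).Finite := List.finite_toSet _
    have hcut := Arc.edge_mem_edgeCut (a := a) (X := Y)
    by_cases ha : a.edge ∈ G.edgeCut Y
    · rw [hcons, Set.insert_inter_of_mem ha, Set.ncard_insert_of_notMem (fun h ↦ hap h.1)
        (hfin.inter_of_left _), Nat.odd_add_one, ih h hp]
      tauto
    · rw [hcons, Set.insert_inter_of_notMem ha, ih h hp]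
      tauto

lemma InnerEulerianOn.diff_edgeSet (h : G.InnerEulerianOn U F) (hp : IsArcWalk x z p)
    (hnd : (p.map Arc.edge).Nodup) (hx : x ∈ U) (hz : z ∈ U) (hpF : edgeSet p ⊆ F) :
    G.InnerEulerianOn U (F \ edgeSet p) := by
  rintro Y hY ⟨hfin, hodd⟩
  have heven : Even (edgeSet p ∩ G.edgeCut Y).ncard := by
    rw [← Nat.not_odd_iff_even, hp.odd_ncard_edgeSet_inter_edgeCut hnd]
    simp [hY.notMem_of_mem_right hx, hY.notMem_of_mem_right hz]
  have hpfin : (edgeSet p ∩ G.edgeCut Y).Finite := (List.finite_toSet _).inter_of_left _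
  have hunion : G.edgeCut Y ∩ F =
      (G.edgeCut Y ∩ (F \ edgeSet p)) ∪ (edgeSet p ∩ G.edgeCut Y) := by
    rw [Set.inter_comm (edgeSet p), ← Set.inter_union_distrib_left, Set.sdiff_union_of_subset hpF]
  have hdisj : Disjoint (G.edgeCut Y ∩ (F \ edgeSet p)) (edgeSet p ∩ G.edgeCut Y) :=
    Set.disjoint_sdiff_left.mono Set.inter_subset_right Set.inter_subset_left
  refine h Y hY (hunion ▸ ⟨hfin.union hpfin, ?_⟩)
  rw [Set.ncard_union_eq hdisj hfin hpfin]
  exact hodd.add_even heven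

lemma IsNearLinkage.exists_mem_edgeUnion (hST : Disjoint S T) (hW : G.IsNearLinkage S T F W)
    (hF : G.InnerEulerianOn (S ∪ T) F) (he : e ∈ G.edgeCut S ∩ F) :
    ∃ W', G.IsNearLinkage S T F W' ∧ e ∈ edgeUnion W' := by
  by_cases heW : e ∈ edgeUnion W
  · exact ⟨W, hW, heW⟩
  by_cases hT : (residualReach S F W ∩ T).Nonempty
  · obtain ⟨W', hW'⟩ := hW.exists_isLinkage hST hT
    exact ⟨W', ⟨hW'.toIsTrailSystem, by
      simp [Set.sdiff_eq_empty.2 hW'.subset_edgeUnion]⟩, hW'.subset_edgeUnion he⟩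
  by_cases hno : ∀ p ∈ W, ∀ a ∈ p, a.src ∈ S → a.tgt ∉ residualReach S F W
  · have hYT : Disjoint (residualReach S F W \ S) (S ∪ T) := Set.disjoint_union_right.2
      ⟨Set.disjoint_sdiff_left, (Set.disjoint_iff_inter_eq_empty.2
        (Set.not_nonempty_iff_eq_empty.1 hT)).mono_left Set.sdiff_subset⟩
    have hsub := hW.edgeCut_residualReach_diff_inter_subset hST hno
    obtain ⟨a, rfl, hsrc, htgt⟩ := exists_arc_of_mem_edgeCut he.1
    have hreach : a.tgt ∈ residualReach S F W :=
      IsResidual.tgt_mem_residualReach (.inl ⟨heW, htgt⟩) he.2 (subset_residualReach hsrc)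
    have hcut : G.edgeCut (residualReach S F W \ S) ∩ F = {a.edge} :=
      (hW.subsingleton.anti hsub).eq_singleton_of_mem
        ⟨Arc.edge_mem_edgeCut.2 (by simp [hsrc, htgt, hreach]), he.2⟩
    exact absurd (by simp [hcut]) (hF _ hYT)
  · push Not at hno
    obtain ⟨l, hl, a, ha, hsrc, htgt⟩ := hno
    obtain ⟨W', hW', hcov⟩ := hW.exists_diff_singleton_subset_edgeUnion hST hl ha hsrc htgt
    refine ⟨W', ⟨hW', ?_⟩, hcov ⟨he, fun hea ↦ heW ?_⟩⟩
    · exact (Set.subsingleton_singleton (a := a.edge)).anti (Set.sdiff_subset_comm.1 hcov)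
    · exact hea ▸ edgeSet_subset_edgeUnion hl (Arc.edge_mem_edgeSet ha)

lemma IsNearLinkage.diff_singleton (hW : G.IsNearLinkage S T F W) (hl : l ∈ W) :
    G.IsNearLinkage S T (F \ edgeSet l) (W \ {l}) where
  toIsTrailSystem := edgeUnion_singleton l ▸ hW.diff (Set.singleton_subset_iff.2 hl)
  subsingleton := hW.subsingleton.anti fun _ ⟨⟨heS, heF, hel⟩, heW⟩ ↦
    ⟨⟨heS, heF⟩, fun h ↦ heW (hW.edgeUnion_diff_singleton hl ▸ ⟨h, hel⟩)⟩

end Parity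

section Exhaustion

/-- A trail system in `F` outside of which inner Eulerianity and a near linkage persist. -/
structure IsPartialLinkage (G : Grapht V E) (S T : Set V) (F : Set E) (U : Set (List G.Arc)) :
    Prop extends IsTrailSystem G S T F U where
  innerEulerianOn : G.InnerEulerianOn (S ∪ T) (F \ edgeUnion U)
  exists_isNearLinkage : ∃ W, G.IsNearLinkage S T (F \ edgeUnion U) W

variable {S T : Set V} {F : Set E} {W U : Set (List G.Arc)} {e : E}

lemma IsPartialLinkage.exists_superset (hU : G.IsPartialLinkage S T F U) (hST : Disjoint S T)
    (he : e ∈ G.edgeCut S ∩ F) :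
    ∃ U', U ⊆ U' ∧ G.IsPartialLinkage S T F U' ∧ e ∈ edgeUnion U' := by
  by_cases heU : e ∈ edgeUnion U
  · exact ⟨U, subset_rfl, hU, heU⟩
  obtain ⟨W, hW⟩ := hU.exists_isNearLinkage
  obtain ⟨W', hW', heW'⟩ := hW.exists_mem_edgeUnion hST hU.innerEulerianOn ⟨he.1, he.2, heU⟩
  obtain ⟨l, hl, hel⟩ := mem_edgeUnion.1 heW'
  have hlF : edgeSet l ⊆ F \ edgeUnion U :=
    (edgeSet_subset_edgeUnion hl).trans hW'.edgeUnion_subset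
  obtain ⟨x, hx, z, hz, hwalk⟩ := (hW'.isTrail l hl).exists_isArcWalk
  have hdiff : F \ edgeUnion (U ∪ {l}) = (F \ edgeUnion U) \ edgeSet l := by
    rw [edgeUnion_union, edgeUnion_singleton, Set.sdiff_sdiff]
  refine ⟨U ∪ {l}, Set.subset_union_left, ⟨?_, ?_, ?_⟩, ?_⟩
  · exact (IsTrailSystem.union ⟨hU.isTrail, hU.disjoint, subset_rfl⟩
      (hW'.isTrail l hl).isTrailSystem (Set.disjoint_sdiff_right.mono_right hlF)).mono
      (Set.union_subset hU.edgeUnion_subset (hlF.trans Set.sdiff_subset))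
  · exact hdiff ▸ hU.innerEulerianOn.diff_edgeSet hwalk (hW'.isTrail l hl).nodup (.inl hx)
      (.inr hz) hlF
  · exact hdiff ▸ ⟨_, hW'.diff_singleton hl⟩
  · exact edgeSet_subset_edgeUnion (.inr rfl) hel

lemma IsTrailSystem.iUnion {ι : Type*} {U : ι → Set (List G.Arc)} (hdir : Directed (· ⊆ ·) U)
    (hU : ∀ i, G.IsTrailSystem S T F (U i)) : G.IsTrailSystem S T F (⋃ i, U i) where
  isTrail p hp := let ⟨i, hi⟩ := Set.mem_iUnion.1 hp; (hU i).isTrail p hi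
  disjoint := (Set.pairwiseDisjoint_iUnion hdir).2 fun i ↦ (hU i).disjoint
  edgeUnion_subset := Set.iUnion₂_subset fun _ hp ↦
    let ⟨i, hi⟩ := Set.mem_iUnion.1 hp
    (edgeSet_subset_edgeUnion hi).trans (hU i).edgeUnion_subset

lemma exists_monotone_of_countable {ι α : Type*} [Countable ι] [Preorder α] {P : α → Prop}
    {Q : ι → α → Prop} (hP : ∃ a, P a) (hstep : ∀ i a, P a → ∃ b, a ≤ b ∧ P b ∧ Q i b) :
    ∃ u : ℕ → α, Monotone u ∧ (∀ n, P (u n)) ∧ ∀ i, ∃ n, Q i (u n) := by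
  obtain ⟨a, ha⟩ := hP
  cases isEmpty_or_nonempty ι with
  | inl => exact ⟨fun _ ↦ a, monotone_const, fun _ ↦ ha, isEmptyElim⟩
  | inr =>
    obtain ⟨f, hf⟩ := exists_surjective_nat ι
    choose next hle hnext hQ using hstep
    let u : ℕ → {a // P a} := fun n ↦
      n.rec ⟨a, ha⟩ fun n b ↦ ⟨next (f n) b b.2, hnext (f n) b b.2⟩
    refine ⟨fun n ↦ (u n).1, monotone_nat_of_le_succ fun n ↦ hle (f n) (u n).1 (u n).2,
      fun n ↦ (u n).2, fun i ↦ ?_⟩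
    obtain ⟨n, rfl⟩ := hf i
    exact ⟨n + 1, hQ (f n) (u n).1 (u n).2⟩

theorem IsNearLinkage.exists_isLinkage_of_innerEulerianOn [Countable E] (hST : Disjoint S T)
    (hW : G.IsNearLinkage S T F W) (hF : G.InnerEulerianOn (S ∪ T) F) :
    ∃ W', G.IsLinkage S T F W' := by
  have hempty : G.IsPartialLinkage S T F ∅ :=
    ⟨⟨by simp, Set.pairwiseDisjoint_empty, by simp [edgeUnion]⟩, by simpa [edgeUnion] using hF,
      W, by simpa [edgeUnion] using hW⟩
  obtain ⟨U, hmono, hU, hcov⟩ := exists_monotone_of_countable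
    (Q := fun (e : ↥(G.edgeCut S ∩ F)) U ↦ (e : E) ∈ edgeUnion U) ⟨∅, hempty⟩
    fun e U hU ↦ hU.exists_superset hST e.2
  refine ⟨⋃ n, U n, .iUnion hmono.directed_le fun n ↦ (hU n).toIsTrailSystem, fun e he ↦ ?_⟩
  obtain ⟨n, hn⟩ := hcov ⟨e, he⟩
  obtain ⟨p, hp, hep⟩ := mem_edgeUnion.1 hn
  exact edgeSet_subset_edgeUnion (Set.mem_iUnion_of_mem n hp) hep

end Exhaustion

section CrossingSystem

variable {s t : V} {F : Set E} {X : Set V} {W Wₛ Wₜ : Set (List G.Arc)} {p : List G.Arc} {e : E}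

/-- A system of pairwise edge-disjoint walks from `s` to `t` which repeat no edge and never
enter `X`. -/
structure IsCrossingSystem (G : Grapht V E) (s t : V) (X : Set V) (W : Set (List G.Arc)) :
    Prop where
  isArcWalk : ∀ p ∈ W, IsArcWalk s t p
  nodup : ∀ p ∈ W, (p.map Arc.edge).Nodup
  neverEnters : ∀ p ∈ W, NeverEnters X p
  disjoint : W.PairwiseDisjoint edgeSet

lemma NeverEnters.reverse (h : NeverEnters X p) : NeverEnters Xᶜ (p.map Arc.rev).reverse :=
  fun _ ha ↦ mt (h _ (mem_reverse_map_rev.1 ha))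

lemma edgeUnion_image_reverse (W : Set (List G.Arc)) :
    edgeUnion ((fun p ↦ (p.map Arc.rev).reverse) '' W) = edgeUnion W := by
  simp [edgeUnion, edgeSet_reverse_map_rev]

lemma IsCrossingSystem.reverse (h : G.IsCrossingSystem s t X W) :
    G.IsCrossingSystem t s Xᶜ ((fun p ↦ (p.map Arc.rev).reverse) '' W) where
  isArcWalk := Set.forall_mem_image.2 fun _ hp ↦ (h.isArcWalk _ hp).reverse
  nodup := Set.forall_mem_image.2 fun p hp ↦ by
    rw [map_edge_reverse_map_rev]
    exact List.nodup_reverse.2 (h.nodup p hp)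
  neverEnters := Set.forall_mem_image.2 fun p hp ↦ (h.neverEnters p hp).reverse
  disjoint := by
    rintro _ ⟨p, hp, rfl⟩ _ ⟨q, hq, rfl⟩ hne
    simp only [Function.onFun, edgeSet_reverse_map_rev]
    exact h.disjoint hp hq fun hpq ↦ hne (hpq ▸ rfl)

lemma IsArcWalk.exists_isTrail_of_neverEnters (h : IsArcWalk s t p)
    (hnd : (p.map Arc.edge).Nodup) (hp : NeverEnters X p) (hs : s ∈ X) (ht : t ∉ X) :
    ∃ q, G.IsTrail X {t} q ∧ edgeSet q ⊆ edgeSet p ∧ edgeSet p ∩ G.edgeCut X ⊆ edgeSet q := by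
  obtain ⟨q, a, r, rfl, hq, hsrc, htgt, hr⟩ := h.exists_eq_append_cons hs ht hp
  obtain ⟨y, -, har⟩ := isArcWalk_append.1 h
  rw [List.map_append] at hnd
  refine ⟨a :: r, ⟨⟨a.src, hsrc, t, rfl, rfl, har.2⟩, hnd.of_append_right, ?_⟩,
    edgeSet_subset_edgeSet (List.subset_append_right q _), ?_⟩
  · exact List.forall_mem_cons.2 ⟨htgt, fun b hb ↦ (hr b hb).2⟩
  · rw [edgeSet_append_cons_inter_edgeCut hq ((Arc.edge_mem_edgeCut_of_src_mem hsrc).2 htgt) hr]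
    exact Set.singleton_subset_iff.2 (Arc.edge_mem_edgeSet List.mem_cons_self)

lemma IsCrossingSystem.exists_isNearLinkage (h : G.IsCrossingSystem s t X W) (hs : s ∈ X)
    (ht : t ∉ X) (hcov : (G.edgeCut X \ edgeUnion W).Subsingleton) :
    ∃ W', G.IsNearLinkage X {t} Set.univ W' := by
  choose q hq hqp hpq using fun p : W ↦
    (h.isArcWalk p p.2).exists_isTrail_of_neverEnters (h.nodup p p.2) (h.neverEnters p p.2) hs ht
  refine ⟨Set.range q, ⟨⟨Set.forall_mem_range.2 hq, ?_, Set.subset_univ _⟩, hcov.anti ?_⟩⟩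
  · rintro _ ⟨p, rfl⟩ _ ⟨p', rfl⟩ hne
    exact (h.disjoint p.2 p'.2 fun hpp' ↦ hne (congrArg q (Subtype.ext hpp'))).mono
      (hqp p) (hqp p')
  · rintro e ⟨⟨heX, -⟩, heq⟩
    refine ⟨heX, fun heW ↦ heq ?_⟩
    obtain ⟨p, hp, hep⟩ := mem_edgeUnion.1 heW
    exact mem_edgeUnion.2 ⟨_, ⟨⟨p, hp⟩, rfl⟩, hpq ⟨p, hp⟩ ⟨hep, heX⟩⟩

lemma IsLinkage.exists_cons_mem {S T : Set V} {a : G.Arc} (hW : G.IsLinkage S T F W)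
    (hST : Disjoint S T) (haF : a.edge ∈ F) (hsrc : a.src ∈ S) (htgt : a.tgt ∉ S) :
    ∃ p, a :: p ∈ W ∧ (∃ z ∈ T, IsArcWalk a.tgt z p) ∧ ∀ b ∈ p, b.src ∉ S ∧ b.tgt ∉ S := by
  have haS := (Arc.edge_mem_edgeCut_of_src_mem hsrc).2 htgt
  obtain ⟨p, hp, hap⟩ := mem_edgeUnion.1 (hW.subset_edgeUnion ⟨haS, haF⟩)
  have htrail := hW.isTrail p hp
  obtain ⟨b, q, rfl, hbsrc, hbtgt, hq⟩ := htrail.exists_eq_cons hST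
  have hab : a.edge = b.edge := (edgeSet_append_cons_inter_edgeCut (q := []) (by simp)
    ((Arc.edge_mem_edgeCut_of_src_mem hbsrc).2 hbtgt) hq).le ⟨hap, haS⟩
  obtain rfl | rfl := Arc.eq_or_eq_rev hab
  · obtain ⟨x, -, z, hz, hwalk⟩ := htrail.exists_isArcWalk
    exact ⟨q, hp, ⟨z, hz, hwalk.2⟩, hq⟩
  · exact absurd hbsrc htgt

lemma exists_isArcWalk_through (hWₛ : G.IsLinkage Xᶜ {s} Set.univ Wₛ)
    (hWₜ : G.IsLinkage X {t} Set.univ Wₜ) (hs : s ∈ X) (ht : t ∉ X) (he : e ∈ G.edgeCut X) :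
    ∃ k : List G.Arc, ∃ p ∈ Wₛ, ∃ q ∈ Wₜ, IsArcWalk s t k ∧ NeverEnters X k ∧
      e ∈ edgeSet k ∧ e ∈ edgeSet p ∧ e ∈ edgeSet q ∧
      ∀ c ∈ k, (c.src ∈ X → c.edge ∈ edgeSet p) ∧ (c.tgt ∉ X → c.edge ∈ edgeSet q) := by
  obtain ⟨a, rfl, hsrc, htgt⟩ := exists_arc_of_mem_edgeCut he
  obtain ⟨p, hp, ⟨s, rfl, hpwalk⟩, hpX⟩ := hWₛ.exists_cons_mem (a := a.rev) (by simpa using hs)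
    trivial htgt (not_not.2 hsrc)
  obtain ⟨q, hq, ⟨t, rfl, hqwalk⟩, hqX⟩ := hWₜ.exists_cons_mem (by simpa using ht)
    trivial hsrc htgt
  simp only [Set.mem_compl_iff, not_not] at hpX
  have hmem : ∀ c ∈ (p.map Arc.rev).reverse ++ a :: q, c.rev ∈ p ∨ c = a ∨ c ∈ q := by
    simp only [List.mem_append, mem_reverse_map_rev, List.mem_cons, imp_self, implies_true]
  refine ⟨(p.map Arc.rev).reverse ++ a :: q, _, hp, _, hq,
    isArcWalk_append.2 ⟨a.src, hpwalk.reverse, rfl, hqwalk⟩, fun c hc ↦ ?_,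
    Arc.edge_mem_edgeSet (by simp), Arc.edge_mem_edgeSet (a := a.rev) List.mem_cons_self,
    Arc.edge_mem_edgeSet List.mem_cons_self, fun c hc ↦ ?_⟩
  · rcases hmem c hc with h | rfl | h
    · exact fun _ ↦ (hpX _ h).2
    · exact fun _ ↦ hsrc
    · exact fun hcX ↦ absurd hcX (hqX c h).2
  · rcases hmem c hc with h | rfl | h
    · exact ⟨fun _ ↦ Arc.edge_mem_edgeSet (a := c.rev) (List.mem_cons_of_mem _ h),
        fun hcX ↦ absurd (hpX _ h).1 hcX⟩
    · exact ⟨fun _ ↦ Arc.edge_mem_edgeSet (a := c.rev) List.mem_cons_self,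
        fun _ ↦ Arc.edge_mem_edgeSet List.mem_cons_self⟩
    · exact ⟨fun hcX ↦ absurd hcX (hqX c h).1,
        fun _ ↦ Arc.edge_mem_edgeSet (List.mem_cons_of_mem _ h)⟩

lemma IsTrailSystem.eq_of_mem_edgeCut {S T : Set V} {q : List G.Arc} {e' f : E}
    (hW : G.IsTrailSystem S T F W) (hST : Disjoint S T) (hp : p ∈ W) (hq : q ∈ W)
    (hep : e ∈ edgeSet p ∩ G.edgeCut S) (heq : e' ∈ edgeSet q ∩ G.edgeCut S)
    (hfp : f ∈ edgeSet p) (hfq : f ∈ edgeSet q) : e = e' := by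
  obtain rfl : p = q := hW.disjoint.elim_set hp hq f hfp hfq
  obtain ⟨a, -, -, -, ha⟩ := (hW.isTrail p hp).exists_eq_cons_inter_edgeCut hST
  exact (ha.le hep).trans (ha.le heq).symm

lemma isEMABCut_edgeCut_of_isLinkage (hWₛ : G.IsLinkage Xᶜ {s} Set.univ Wₛ)
    (hWₜ : G.IsLinkage X {t} Set.univ Wₜ) (hs : s ∈ X) (ht : t ∉ X) :
    G.IsEMABCut {s} {t} (G.edgeCut X) := by
  choose k p hp q hq hwalk hX hek hep heq hmem using fun e : G.edgeCut X ↦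
    exists_isArcWalk_through hWₛ hWₜ hs ht e.2
  refine isEMABCut_edgeCut (W := Set.range k) hs ht
    (Set.forall_mem_range.2 fun e ↦ ⟨hwalk e, hX e⟩) ?_
    fun e he ↦ mem_edgeUnion.2 ⟨_, ⟨⟨e, he⟩, rfl⟩, hek ⟨e, he⟩⟩
  rintro _ ⟨e, rfl⟩ _ ⟨e', rfl⟩ hne
  refine Set.disjoint_left.2 fun f hf hf' ↦ hne (congrArg k (Subtype.ext ?_))
  obtain ⟨c, hc, rfl⟩ := mem_edgeSet.1 hf
  obtain ⟨d, hd, hdc⟩ := mem_edgeSet.1 hf'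
  have hcX := hX e c hc
  have hdX := hX e' d hd
  have hside : c.src ∈ X ∧ d.src ∈ X ∨ c.tgt ∉ X ∧ d.tgt ∉ X := by
    rcases Arc.eq_or_eq_rev hdc with rfl | rfl <;> simp only [Arc.rev_src, Arc.rev_tgt] at * <;>
      tauto
  rcases hside with ⟨hcs, hds⟩ | ⟨hct, hdt⟩
  · exact hWₛ.eq_of_mem_edgeCut (by simpa using hs) (hp e) (hp e')
      ⟨hep e, (edgeCut_compl X).symm ▸ e.2⟩ ⟨hep e', (edgeCut_compl X).symm ▸ e'.2⟩
      ((hmem e c hc).1 hcs) (hdc ▸ (hmem e' d hd).1 hds)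
  · exact hWₜ.eq_of_mem_edgeCut (by simpa using ht) (hq e) (hq e') ⟨heq e, e.2⟩ ⟨heq e', e'.2⟩
      ((hmem e c hc).2 hct) (hdc ▸ (hmem e' d hd).2 hdt)

theorem IsCrossingSystem.isEMABCut_edgeCut [Countable E] (h : G.IsCrossingSystem s t X W)
    (hG : G.InnerEulerianOn {s, t} Set.univ) (hs : s ∈ X) (ht : t ∉ X)
    (hcov : (G.edgeCut X \ edgeUnion W).Subsingleton) : G.IsEMABCut {s} {t} (G.edgeCut X) := by
  obtain ⟨Wₜ, hWₜ⟩ := h.exists_isNearLinkage hs ht hcov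
  obtain ⟨Wₛ, hWₛ⟩ := h.reverse.exists_isNearLinkage ht (not_not.2 hs)
    (by rwa [edgeCut_compl, edgeUnion_image_reverse])
  obtain ⟨Wₜ', hWₜ'⟩ := hWₜ.exists_isLinkage_of_innerEulerianOn (by simpa using ht)
    (hG.mono (by simp [Set.insert_subset_iff, hs]))
  obtain ⟨Wₛ', hWₛ'⟩ := hWₛ.exists_isLinkage_of_innerEulerianOn (by simpa using hs)
    (hG.mono (by simp [Set.insert_subset_iff, ht]))
  exact isEMABCut_edgeCut_of_isLinkage hWₛ' hWₜ' hs ht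

lemma IsTrailSystem.isCrossingSystem (hW : G.IsTrailSystem {s} {t} F W)
    (hX : ∀ p ∈ W, NeverEnters X p) : G.IsCrossingSystem s t X W where
  isArcWalk p hp := by
    obtain ⟨_, rfl, _, rfl, h⟩ := (hW.isTrail p hp).exists_isArcWalk
    exact h
  nodup p hp := (hW.isTrail p hp).nodup
  neverEnters := hX
  disjoint := hW.disjoint

/-- If the deletion of `g` destroyed linkedness, there would be an Erdős–Menger cut containing `g`
other than the cut of `s`. -/
theorem IsLinkage.exists_isLinkage_diff_singleton [Countable E]
    (hG : G.InnerEulerianOn {s, t} Set.univ)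
    (huniq : ∀ C : Set E, G.IsEMABCut {s} {t} C → C = G.edgeCut {s}) (hst : s ≠ t)
    (hF : Fᶜ.Subsingleton) (hW : G.IsLinkage {s} {t} F W) (g : E) :
    ∃ W', G.IsLinkage {s} {t} (F \ {g}) W' := by
  refine (hW.exists_isLinkage_diff_singleton_or (Set.disjoint_singleton.2 hst) g).resolve_right ?_
  rintro ⟨X, hs, ht, hgX, hgs, hcov, hX⟩
  have hEM : G.IsEMABCut {s} {t} (G.edgeCut X) :=
    (hW.isCrossingSystem hX).isEMABCut_edgeCut hG (hs rfl) (ht.notMem_of_mem_right rfl)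
      (hF.anti fun e ⟨heX, heW⟩ heF ↦ heW (hcov ⟨heX, heF⟩))
  exact hgs (huniq _ hEM ▸ hgX)

end CrossingSystem

end Grapht

/-- **Safe deletion of two edges.** In a countable inner Eulerian two-terminal grapht
in which `δ(s)` is the unique Erdős–Menger `st`-cut, `s` remains linked after deleting
any (at most) two edges. -/
theorem safe_deletion_of_two_edges {V : Type u} {E : Type v} [Countable E]
    (G : Grapht V E) (s t : V) (hst : s ≠ t) (hT : G.T = {s, t})
    (hG : G.InnerEulerian)
    (hEM : G.IsEMABCut {s} {t} (G.edgeCut {s}))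
    (huniq : ∀ C : Set E, G.IsEMABCut {s} {t} C → C = G.edgeCut {s}) :
    ∀ f g : E, (G.restrict {f, g}ᶜ).StLinked s t := by
  intro f g
  have hpar : G.InnerEulerianOn {s, t} Set.univ := hT ▸ hG.innerEulerianOn
  obtain ⟨W₀, hW₀⟩ := hEM.exists_isLinkage
  obtain ⟨W₁, hW₁⟩ := hW₀.exists_isLinkage_diff_singleton hpar huniq hst (by simp) f
  obtain ⟨W₂, hW₂⟩ := hW₁.exists_isLinkage_diff_singleton hpar huniq hst
    (by simp [Set.compl_eq_univ_sdiff]) g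
  have hfg : ((Set.univ \ {f}) \ {g} : Set E) = {f, g}ᶜ := by
    rw [Set.sdiff_sdiff, Set.compl_eq_univ_sdiff, Set.singleton_union]
  exact (hfg ▸ hW₂).stLinked hst
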